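/- arXiv:2504.00177 — 10 statements merged into one kernel-verified Lean document; each statement's English description precedes it below -/
import Mathlib

section
/- Let p be an integer and let Γ = B(2p, 2p+2) = ⟨a, t ∣ t a^{2p} t⁻¹ = a^{2p+2}⟩. Let φ : Γ → ℤ/2 be the group homomorphism determined by φ(a) = 1 and φ(t) = 0 (well defined since the relator has exponent sum −2 in a and 0 in t), and let Γ' = ker φ. Then Γ' has index 2 in Γ and the abelianization of Γ' is isomorphic to ℤ × ℤ, the free abelian group of rank 2. -/
/-- The relator `t a^m t⁻¹ a^{-n}` of the Baumslag–Solitar group, in the free group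
on two generators, where `a` is `FreeGroup.of 0` and `t` is `FreeGroup.of 1`. -/
def BSRel (m n : ℤ) : FreeGroup (Fin 2) :=
  FreeGroup.of 1 * FreeGroup.of 0 ^ m * (FreeGroup.of 1)⁻¹ * FreeGroup.of 0 ^ (-n)

/-- The Baumslag–Solitar group `B(m,n) = ⟨a, t ∣ t a^m t⁻¹ = a^n⟩`. -/
abbrev BS (m n : ℤ) : Type :=
  PresentedGroup ({BSRel m n} : Set (FreeGroup (Fin 2)))

/-- The homomorphism from the cyclic group of order two sending the generator to an element
whose square is trivial. -/
def homOfSqEqOne {G : Type*} [Group G] (g : G) (hg : g ^ 2 = 1) :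
    Multiplicative (ZMod 2) →* G :=
  AddMonoidHom.toMultiplicativeLeft
    (ZMod.lift 2 ⟨zmultiplesHom (Additive G) (Additive.ofMul g), by
      simp only [zmultiplesHom_apply, natCast_zsmul, ← ofMul_pow, hg, ofMul_one]⟩)

lemma homOfSqEqOne_ofAdd_one {G : Type*} [Group G] (g : G) (hg : g ^ 2 = 1) :
    homOfSqEqOne g hg (Multiplicative.ofAdd 1) = g := by
  have h := ZMod.lift_coe 2 (⟨zmultiplesHom (Additive G) (Additive.ofMul g), by
      simp only [zmultiplesHom_apply, natCast_zsmul, ← ofMul_pow, hg, ofMul_one]⟩ :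
      {f : ℤ →+ Additive G // f (2 : ℕ) = 0}) 1
  rw [Int.cast_one] at h
  exact congrArg Additive.toMul (h.trans (one_zsmul (Additive.ofMul g)))

lemma multiplicative_zmod_two_cases (x : Multiplicative (ZMod 2)) :
    x = 1 ∨ x = Multiplicative.ofAdd 1 := by
  revert x
  decide

/-- The free abelian group of rank two, written multiplicatively. -/
abbrev FreeAbTwo : Type := Multiplicative ℤ × Multiplicative ℤ

/-- The action of the cyclic group of order two on `ℤ × ℤ` by swapping the factors. -/
def swapAction : Multiplicative (ZMod 2) →* MulAut FreeAbTwo :=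
  homOfSqEqOne (MulEquiv.prodComm : FreeAbTwo ≃* FreeAbTwo) (by ext x <;> rfl)

lemma swapAction_ofAdd_one (x : FreeAbTwo) :
    swapAction (Multiplicative.ofAdd 1) x = x.swap := by
  rw [swapAction, homOfSqEqOne_ofAdd_one]
  rfl

/-- The wreath product of `ℤ` with the cyclic group of order two. -/
abbrev WreathTwo : Type := FreeAbTwo ⋊[swapAction] Multiplicative (ZMod 2)

/-- A homomorphism out of the wreath product, given by an involution `a` and an element `t`
commuting with its conjugate by `a`. -/
def wreathLift {G : Type*} [Group G] (a t : G) (ha : a ^ 2 = 1)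
    (hc : Commute t (a * t * a⁻¹)) : WreathTwo →* G :=
  SemidirectProduct.lift
    ((zpowersHom G t).noncommCoprod (zpowersHom G (a * t * a⁻¹)) fun m n => by
      simpa only [zpowersHom_apply] using hc.zpow_zpow _ _)
    (homOfSqEqOne a ha) (by
      have haa : a⁻¹ = a := by rw [inv_eq_iff_mul_eq_one, ← sq, ha]
      intro x
      rcases multiplicative_zmod_two_cases x with rfl | rfl
      · simp only [map_one]
        ext
        simp
      · refine MonoidHom.ext fun y => ?_
        simp only [MonoidHom.comp_apply, MulEquiv.coe_toMonoidHom, swapAction_ofAdd_one,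
          homOfSqEqOne_ofAdd_one, MonoidHom.noncommCoprod_apply, MulAut.conj_apply,
          zpowersHom_apply, Prod.fst_swap, Prod.snd_swap]
        rw [(hc.zpow_zpow _ _).eq, conj_zpow, conj_zpow]
        have ha2 : a * a = 1 := by rw [← sq, ha]
        simp only [haa, mul_assoc, ha2, mul_one])

lemma bs_relation (m n : ℤ) :
    (PresentedGroup.of 1 : BS m n) * PresentedGroup.of 0 ^ m * (PresentedGroup.of 1)⁻¹ =
      PresentedGroup.of 0 ^ n := by
  have h : PresentedGroup.mk {BSRel m n} (BSRel m n) = 1 :=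
    PresentedGroup.one_of_mem (Set.mem_singleton _)
  rw [← mul_inv_eq_one, ← zpow_neg]
  exact h

/-- The homomorphism from `B(2p, 2p+2)` to the wreath product sending `a` to the swap and `t` to
the first basis vector. -/
def bsToWreath (p : ℤ) : BS (2 * p) (2 * p + 2) →* WreathTwo :=
  PresentedGroup.toGroup
    (f := ![SemidirectProduct.inr (Multiplicative.ofAdd 1),
      SemidirectProduct.inl (Multiplicative.ofAdd 1, 1)]) (by
    rintro r rfl
    have h : (SemidirectProduct.inr (Multiplicative.ofAdd 1) : WreathTwo) ^ 2 = 1 := by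
      rw [← map_pow]
      exact map_one _
    simp [BSRel, neg_add_rev, zpow_add, zpow_mul, h, zpow_neg])

lemma bsToWreath_a (p : ℤ) : bsToWreath p (PresentedGroup.of 0) =
    SemidirectProduct.inr (Multiplicative.ofAdd 1) := by
  simp [bsToWreath]

lemma bsToWreath_t (p : ℤ) : bsToWreath p (PresentedGroup.of 1) =
    SemidirectProduct.inl (Multiplicative.ofAdd 1, 1) := by
  simp [bsToWreath]

/-- If `K` is a normal subgroup containing `a²` and `t`, then the kernel of the map to the wreath
product is contained in `⁅K, K⁆`. -/
lemma ker_bsToWreath_le (p : ℤ) (K : Subgroup (BS (2 * p) (2 * p + 2))) [K.Normal]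
    (ha : (PresentedGroup.of 0 : BS (2 * p) (2 * p + 2)) ^ (2 : ℤ) ∈ K)
    (ht : (PresentedGroup.of 1 : BS (2 * p) (2 * p + 2)) ∈ K) :
    (bsToWreath p).ker ≤ ⁅K, K⁆ := by
  set a : BS (2 * p) (2 * p + 2) := PresentedGroup.of 0 with ha_def
  set t : BS (2 * p) (2 * p + 2) := PresentedGroup.of 1 with ht_def
  let q := QuotientGroup.mk' ⁅K, K⁆
  have hcomm : ∀ x ∈ K, ∀ y ∈ K, Commute (q x) (q y) := by
    intro x hx y hy
    rw [← commutatorElement_eq_one_iff_commute, ← map_commutatorElement]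
    exact (QuotientGroup.eq_one_iff _).mpr (Subgroup.commutator_mem_commutator hx hy)
  have hqa : q a ^ 2 = 1 := by
    have hrel := congrArg q (bs_relation (2 * p) (2 * p + 2))
    rw [← ha_def, ← ht_def, map_mul, map_mul, map_inv, zpow_mul,
      (hcomm t ht _ (K.zpow_mem ha p)).eq, mul_inv_cancel_right, zpow_add, zpow_mul, map_mul,
      left_eq_mul, map_zpow] at hrel
    exact_mod_cast hrel
  have hqt : Commute (q t) (q a * q t * (q a)⁻¹) := by
    rw [← map_inv, ← map_mul, ← map_mul]
    exact hcomm _ ht _ (Subgroup.Normal.conj_mem ‹_› t ht a)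
  have hcomp : (wreathLift (q a) (q t) hqa hqt).comp (bsToWreath p) = q := by
    refine PresentedGroup.ext fun i => ?_
    fin_cases i
    · change wreathLift _ _ hqa hqt (bsToWreath p (PresentedGroup.of 0)) = q a
      rw [bsToWreath_a, wreathLift, SemidirectProduct.lift_inr, homOfSqEqOne_ofAdd_one]
    · change wreathLift _ _ hqa hqt (bsToWreath p (PresentedGroup.of 1)) = q t
      rw [bsToWreath_t, wreathLift, SemidirectProduct.lift_inl]
      simp
  intro g hg
  rw [← QuotientGroup.eq_one_iff]
  change q g = 1
  rw [← hcomp, MonoidHom.comp_apply, MonoidHom.mem_ker.mp hg, map_one]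

/-- The homomorphism to the left factor of a semidirect product, on a subgroup mapping trivially
to the right factor. -/
def leftHom {G N H : Type*} [Group G] [Group N] [Group H] {α : H →* MulAut N}
    (f : G →* N ⋊[α] H) (K : Subgroup G) (hK : ∀ g ∈ K, (f g).right = 1) : K →* N where
  toFun g := (f g).left
  map_one' := by simp
  map_mul' x y := by simp [hK x x.2]

theorem stmt_4 (p : ℤ)
    (φ : BS (2 * p) (2 * p + 2) →* Multiplicative (ZMod 2))
    (hφa : φ (PresentedGroup.of 0) = Multiplicative.ofAdd 1)
    (hφt : φ (PresentedGroup.of 1) = Multiplicative.ofAdd 0) :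
    (MonoidHom.ker φ).index = 2 ∧
      Nonempty (Abelianization ↥(MonoidHom.ker φ) ≃* Multiplicative (ℤ × ℤ)) := by
  have hsurj : Function.Surjective φ := fun x => by
    rcases multiplicative_zmod_two_cases x with rfl | rfl
    exacts [⟨1, map_one φ⟩, ⟨_, hφa⟩]
  refine ⟨?_, ?_⟩
  · rw [Subgroup.index_ker, MonoidHom.range_eq_top.mpr hsurj, Subgroup.card_top]
    simp
  have hright : SemidirectProduct.rightHom.comp (bsToWreath p) = φ := by
    refine PresentedGroup.ext fun i => ?_
    fin_cases i
    · exact (congrArg SemidirectProduct.right (bsToWreath_a p)).trans hφa.symm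
    · exact (congrArg SemidirectProduct.right (bsToWreath_t p)).trans hφt.symm
  have hker : ∀ g ∈ φ.ker, (bsToWreath p g).right = 1 := fun g hg => by
    rw [← hright] at hg
    exact hg
  have ht : PresentedGroup.of 1 ∈ φ.ker := hφt
  have ha : (PresentedGroup.of 0 : BS (2 * p) (2 * p + 2)) ^ (2 : ℤ) ∈ φ.ker := by
    rw [MonoidHom.mem_ker, map_zpow, hφa]
    rfl
  let ψ := leftHom (bsToWreath p) φ.ker hker
  have hψ : Function.Surjective ψ := by
    let t : φ.ker := ⟨PresentedGroup.of 1, ht⟩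
    let s : φ.ker := ⟨PresentedGroup.of 0 * PresentedGroup.of 1 * (PresentedGroup.of 0)⁻¹,
      Subgroup.Normal.conj_mem inferInstance _ ht _⟩
    have hψt : ψ t = (Multiplicative.ofAdd 1, 1) := by
      change (bsToWreath p (PresentedGroup.of 1)).left = _
      rw [bsToWreath_t, SemidirectProduct.left_inl]
    have hψs : ψ s = (1, Multiplicative.ofAdd 1) := by
      change (bsToWreath p (PresentedGroup.of 0 * PresentedGroup.of 1 *
        (PresentedGroup.of 0)⁻¹)).left = _
      rw [map_mul, map_mul, map_inv, bsToWreath_a, bsToWreath_t, ← map_inv,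
        ← SemidirectProduct.inl_aut, SemidirectProduct.left_inl, swapAction_ofAdd_one]
      rfl
    rintro ⟨m, n⟩
    refine ⟨t ^ m.toAdd * s ^ n.toAdd, ?_⟩
    rw [map_mul, map_zpow, map_zpow, hψt, hψs]
    ext <;> simp [← ofAdd_zsmul]
  have hψker : ψ.ker = commutator φ.ker := by
    refine le_antisymm (fun g hg => ?_) (Abelianization.commutator_subset_ker ψ)
    have hg' : (g : BS (2 * p) (2 * p + 2)) ∈ ⁅φ.ker, φ.ker⁆ :=
      ker_bsToWreath_le p φ.ker ha ht (SemidirectProduct.ext hg (hker g g.2))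
    rw [← Subgroup.map_subtype_commutator] at hg'
    obtain ⟨k, hk, hkg⟩ := hg'
    rwa [← Subtype.ext hkg]
  exact ⟨(QuotientGroup.quotientMulEquivOfEq hψker.symm).trans
    ((QuotientGroup.quotientKerEquivOfSurjective ψ hψ).trans
      (MulEquiv.prodMultiplicative ℤ ℤ).symm)⟩
end

section
/- Let p be an integer and let Γ = B(2p+1, 2p+3) = ⟨a, t ∣ t a^{2p+1} t⁻¹ = a^{2p+3}⟩. Let φ : Γ → ℤ/2 be the group homomorphism determined by φ(a) = 0 and φ(t) = 1 (well defined since the relator has exponent sum −2 in a and 0 in t), and let Γ' = ker φ. Then Γ' has index 2 in Γ and the abelianization of Γ' is isomorphic to ℤ × ℤ/|8(p+1)|. -/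
/-- If `a` and `t` generate `G`, and `φ : G → ℤ/2` kills `a` but not `t`, then the kernel of `φ`
is contained in the subgroup generated by `a`, `t a t⁻¹` and `t²`. -/
lemma ker_le_closure_of_generators {G : Type*} [Group G] {a t : G}
    (hgen : Subgroup.closure {a, t} = ⊤) (φ : G →* Multiplicative (ZMod 2))
    (ha : φ a = Multiplicative.ofAdd 0) (ht : φ t = Multiplicative.ofAdd 1) :
    φ.ker ≤ Subgroup.closure {a, t * a * t⁻¹, t * t} := by
  set K := Subgroup.closure ({a, t * a * t⁻¹, t * t} : Set G) with hK
  have haK : a ∈ K := Subgroup.subset_closure (by simp)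
  have hbK : t * a * t⁻¹ ∈ K := Subgroup.subset_closure (by simp)
  have hsK : t * t ∈ K := Subgroup.subset_closure (by simp)
  have conj_mem : ∀ k ∈ K, t * k * t⁻¹ ∈ K := by
    have hle : K ≤ K.comap (MulAut.conj t).toMonoidHom := by
      rw [hK, Subgroup.closure_le, ← hK]
      rintro x (rfl | rfl | rfl)
      · simpa using hbK
      · have h := K.mul_mem (K.mul_mem hsK haK) (K.inv_mem hsK)
        simpa [mul_assoc] using h
      · simpa [mul_assoc] using hsK
    intro k hk
    simpa using hle hk
  have conj_inv_mem : ∀ k ∈ K, t⁻¹ * k * t ∈ K := by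
    intro k hk
    have h := K.mul_mem (K.mul_mem (K.inv_mem hsK) (conj_mem k hk)) hsK
    simpa [mul_assoc] using h
  have hcoset : ∀ g : G, g ∈ K ∨ g * t⁻¹ ∈ K := by
    intro g
    have hg : g ∈ Subgroup.closure ({a, t} : Set G) := by simp [hgen]
    induction hg using Subgroup.closure_induction_left with
    | one => exact Or.inl K.one_mem
    | mul_left x hx y _ ih =>
      rcases hx with rfl | rfl
      · rcases ih with h | h
        · exact Or.inl (K.mul_mem haK h)
        · exact Or.inr (by simpa [mul_assoc] using K.mul_mem haK h)
      · rcases ih with h | h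
        · exact Or.inr (conj_mem _ h)
        · exact Or.inl (by simpa [mul_assoc] using K.mul_mem (conj_mem _ h) hsK)
    | inv_mul_cancel x hx y _ ih =>
      rcases hx with rfl | rfl
      · rcases ih with h | h
        · exact Or.inl (K.mul_mem (K.inv_mem haK) h)
        · exact Or.inr (by simpa [mul_assoc] using K.mul_mem (K.inv_mem haK) h)
      · rcases ih with h | h
        · exact Or.inr (by
            simpa [mul_assoc] using K.mul_mem (conj_inv_mem _ h) (K.inv_mem hsK))
        · exact Or.inl (by simpa [mul_assoc] using conj_inv_mem _ h)
  have hKker : K ≤ φ.ker := by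
    rw [hK, Subgroup.closure_le]
    rintro x (rfl | rfl | rfl)
    · simp [MonoidHom.mem_ker, ha]
    · simp [MonoidHom.mem_ker, ha]
    · simp only [SetLike.mem_coe, MonoidHom.mem_ker, map_mul, ht]
      decide
  intro g hg
  refine (hcoset g).resolve_right fun h => ?_
  have h' := hKker h
  rw [MonoidHom.mem_ker, map_mul, MonoidHom.mem_ker.mp hg, map_inv, ht] at h'
  exact absurd h' (by decide)

/-- Multiplication by an element `w` with `w² = 1`, as an automorphism of the additive group
of a commutative ring, written multiplicatively. -/
def mulInvolution {R : Type*} [CommRing R] (w : R) (hw : w * w = 1) :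
    MulAut (Multiplicative R) where
  toFun x := Multiplicative.ofAdd (w * x.toAdd)
  invFun x := Multiplicative.ofAdd (w * x.toAdd)
  left_inv x := by simp [← mul_assoc, hw]
  right_inv x := by simp [← mul_assoc, hw]
  map_mul' x y := by simp [mul_add]

lemma mulInvolution_sq {R : Type*} [CommRing R] (w : R) (hw : w * w = 1) :
    mulInvolution w hw * mulInvolution w hw = 1 := by
  ext x
  simp [mulInvolution, ← mul_assoc, hw]

/-- The relation `t a^m t⁻¹ = a^n` in `B(m,n)`. -/
lemma BS_relation (m n : ℤ) :
    (PresentedGroup.of 1 * PresentedGroup.of 0 ^ m * (PresentedGroup.of 1)⁻¹ : BS m n) =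
      PresentedGroup.of 0 ^ n := by
  have h : PresentedGroup.mk ({BSRel m n} : Set (FreeGroup (Fin 2))) (BSRel m n) = 1 :=
    PresentedGroup.one_of_mem rfl
  rw [← mul_inv_eq_one, ← zpow_neg]
  exact h

/-- The generators `a`, `t` generate `B(m,n)`. -/
lemma BS_closure (m n : ℤ) :
    Subgroup.closure ({PresentedGroup.of 0, PresentedGroup.of 1} : Set (BS m n)) = ⊤ := by
  rw [← PresentedGroup.closure_range_of]
  congr 1
  ext x
  simp [Fin.exists_fin_two, eq_comm]

/-- The representation of `B(m,n)` in `R ⋊ ℤ`, where `1 ∈ ℤ` acts on `R` as multiplication by `w`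
with `w² = 1` and `w m = n`; it sends `a` to `m` and `t` to the generator of `ℤ`. -/
def BSToSemidirect {R : Type*} [CommRing R] (m n : ℤ) (w : R) (hw : w * w = 1)
    (hwm : w * m = n) :
    BS m n →* SemidirectProduct (Multiplicative R) (Multiplicative ℤ)
      (zpowersHom _ (mulInvolution w hw)) :=
  PresentedGroup.toGroup
    (f := ![SemidirectProduct.inl (Multiplicative.ofAdd (m : R)),
      SemidirectProduct.inr (Multiplicative.ofAdd (1 : ℤ))]) (by
    rintro r rfl
    simp only [BSRel, map_mul, map_inv, map_zpow, FreeGroup.lift_apply_of, Matrix.cons_val_zero,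
      Matrix.cons_val_one]
    rw [← map_zpow SemidirectProduct.inl, ← map_inv, ← SemidirectProduct.inl_aut,
      ← map_zpow SemidirectProduct.inl, ← map_mul, ← map_one SemidirectProduct.inl]
    congr 1
    apply Multiplicative.toAdd.injective
    simp only [zpowersHom_apply, toAdd_ofAdd, zpow_one, mulInvolution, toAdd_mul, toAdd_zpow,
      MulEquiv.coe_mk, Equiv.coe_fn_mk, toAdd_one, zsmul_eq_mul, Int.cast_neg]
    linear_combination (m : R) * hwm)

@[simp]
lemma BSToSemidirect_of_zero {R : Type*} [CommRing R] (m n : ℤ) (w : R) (hw : w * w = 1)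
    (hwm : w * m = n) : BSToSemidirect m n w hw hwm (PresentedGroup.of 0) =
      SemidirectProduct.inl (Multiplicative.ofAdd (m : R)) := by
  simp [BSToSemidirect]

@[simp]
lemma BSToSemidirect_of_one {R : Type*} [CommRing R] (m n : ℤ) (w : R) (hw : w * w = 1)
    (hwm : w * m = n) : BSToSemidirect m n w hw hwm (PresentedGroup.of 1) =
      SemidirectProduct.inr (Multiplicative.ofAdd 1) := by
  simp [BSToSemidirect]

lemma BSToSemidirect_conj {R : Type*} [CommRing R] (m n : ℤ) (w : R) (hw : w * w = 1)
    (hwm : w * m = n) :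
    BSToSemidirect m n w hw hwm
      (PresentedGroup.of 1 * PresentedGroup.of 0 * (PresentedGroup.of 1)⁻¹) =
        SemidirectProduct.inl (Multiplicative.ofAdd (n : R)) := by
  rw [map_mul, map_mul, map_inv, BSToSemidirect_of_zero, BSToSemidirect_of_one, ← map_inv,
    ← SemidirectProduct.inl_aut]
  simp [mulInvolution, hwm]

/-- A homomorphism on the kernel of `φ` recording both coordinates of `BSToSemidirect`. -/
lemma exists_kerHom {R : Type*} [CommRing R] (m n : ℤ) (w : R) (hw : w * w = 1)
    (hwm : w * m = n) (φ : BS m n →* Multiplicative (ZMod 2))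
    (ha : φ (PresentedGroup.of 0) = Multiplicative.ofAdd 0)
    (ht : φ (PresentedGroup.of 1) = Multiplicative.ofAdd 1) :
    ∃ F : φ.ker →* Multiplicative (ℤ × R), ∀ g : φ.ker, F g = Multiplicative.ofAdd
      ((BSToSemidirect m n w hw hwm g).right.toAdd,
        (BSToSemidirect m n w hw hwm g).left.toAdd) := by
  have hφ : φ = ((Int.castAddHom (ZMod 2)).toMultiplicative.comp
      SemidirectProduct.rightHom).comp (BSToSemidirect m n w hw hwm) := by
    ext i
    fin_cases i
    · simp [ha]
    · simp [ht]
  have heven : ∀ g : φ.ker, zpowersHom _ (mulInvolution w hw)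
      (BSToSemidirect m n w hw hwm g).right = 1 := by
    intro g
    have hg : φ g = 1 := g.2
    replace hg := (DFunLike.congr_fun hφ (g : BS m n)).symm.trans hg
    have hg' : (((BSToSemidirect m n w hw hwm g).right.toAdd : ℤ) : ZMod 2) = 0 := hg
    rw [ZMod.intCast_zmod_eq_zero_iff_dvd] at hg'
    obtain ⟨k, hk⟩ := hg'
    rw [zpowersHom_apply, hk, zpow_mul]
    norm_cast
    rw [pow_two, mulInvolution_sq, one_zpow]
  refine ⟨MonoidHom.mk' (fun g => Multiplicative.ofAdd
      ((BSToSemidirect m n w hw hwm g).right.toAdd,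
        (BSToSemidirect m n w hw hwm g).left.toAdd)) ?_, fun g => rfl⟩
  intro g h
  rw [← ofAdd_add]
  simp only [Subgroup.coe_mul, map_mul, SemidirectProduct.mul_left, SemidirectProduct.mul_right,
    heven, MulAut.one_apply, toAdd_mul, Prod.mk_add_mk]

theorem stmt_5 (p : ℤ)
    (φ : BS (2 * p + 1) (2 * p + 3) →* Multiplicative (ZMod 2))
    (hφa : φ (PresentedGroup.of 0) = Multiplicative.ofAdd 0)
    (hφt : φ (PresentedGroup.of 1) = Multiplicative.ofAdd 1) :
    (MonoidHom.ker φ).index = 2 ∧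
      Nonempty (Abelianization ↥(MonoidHom.ker φ) ≃*
        Multiplicative (ℤ × ZMod (8 * (p + 1)).natAbs)) := by
  constructor
  · have hsurj : Function.Surjective φ := by
      intro x
      obtain rfl | rfl : x = Multiplicative.ofAdd 0 ∨ x = Multiplicative.ofAdd 1 := by
        revert x; decide
      · exact ⟨_, hφa⟩
      · exact ⟨_, hφt⟩
    rw [Subgroup.index_ker, MonoidHom.range_eq_top.mpr hsurj]
    simp
  set d := (8 * (p + 1)).natAbs with hd
  have hd0 : (8 * (p + 1) : ZMod d) = 0 := by
    have : ((8 * (p + 1) : ℤ) : ZMod d) = 0 := by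
      rw [ZMod.intCast_zmod_eq_zero_iff_dvd, hd]
      exact Int.natAbs_dvd.mpr dvd_rfl
    exact_mod_cast this
  have hw : (4 * p + 3 : ZMod d) * (4 * p + 3) = 1 := by
    linear_combination (2 * p + 1 : ZMod d) * hd0
  have hwm : (4 * p + 3 : ZMod d) * ((2 * p + 1 : ℤ) : ZMod d) = ((2 * p + 3 : ℤ) : ZMod d) := by
    push_cast
    linear_combination (p : ZMod d) * hd0
  obtain ⟨F, hF⟩ := exists_kerHom _ _ _ hw hwm φ hφa hφt
  set a : BS (2 * p + 1) (2 * p + 3) := PresentedGroup.of 0 with ha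
  set t : BS (2 * p + 1) (2 * p + 3) := PresentedGroup.of 1 with ht
  have hrel : t * a ^ (2 * p + 1) * t⁻¹ = a ^ (2 * p + 3) := BS_relation _ _
  let a' : φ.ker := ⟨a, by simp [MonoidHom.mem_ker, hφa]⟩
  let b' : φ.ker := ⟨t * a * t⁻¹, by simp [MonoidHom.mem_ker, hφa]⟩
  let s' : φ.ker := ⟨t * t, by simp only [MonoidHom.mem_ker, map_mul, hφt]; decide⟩
  have hab : b' ^ (2 * p + 1) = a' ^ (2 * p + 3) := by
    ext
    simp [a', b', conj_zpow, hrel]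
  have hba : s' * a' ^ (2 * p + 1) * s'⁻¹ = b' ^ (2 * p + 3) := by
    ext
    simp only [s', a', b', Subgroup.coe_mul, SubgroupClass.coe_zpow, InvMemClass.coe_inv,
      conj_zpow, ← hrel]
    group
  let u : Additive (Abelianization φ.ker) := Additive.ofMul (Abelianization.of a')
  let v : Additive (Abelianization φ.ker) := Additive.ofMul (Abelianization.of b')
  let σ : Additive (Abelianization φ.ker) := Additive.ofMul (Abelianization.of s')
  have huv : (2 * p + 1) • v = (2 * p + 3) • u := by
    have := congrArg (fun x => Additive.ofMul (Abelianization.of x)) hab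
    simpa using this
  have hvu : (2 * p + 1) • u = (2 * p + 3) • v := by
    have := congrArg (fun x => Additive.ofMul (Abelianization.of x)) hba
    simpa using this
  let c := (1 + p) • u - p • v
  have hcu : (2 * p + 1) • c = u := by
    simp only [c]
    linear_combination (norm := module) (-p) • huv
  have hcv : (2 * p + 3) • c = v := by
    simp only [c]
    linear_combination (norm := module) (-(1 + p)) • huv
  have hdc : (8 * (p + 1)) • c = 0 := by
    linear_combination (norm := module) (2 * p + 3) • hcv - (2 * p + 1) • hcu - hvu
  have hdc' : zmultiplesHom _ c (d : ℤ) = 0 := by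
    obtain ⟨k, hk⟩ : 8 * (p + 1) ∣ (d : ℤ) := Int.dvd_natAbs.mpr dvd_rfl
    rw [zmultiplesHom_apply, hk, mul_comm (8 * (p + 1)) k, mul_smul, hdc, smul_zero]
  let J : ℤ × ZMod d →+ Additive (Abelianization φ.ker) :=
    (zmultiplesHom _ σ).coprod (ZMod.lift d ⟨zmultiplesHom _ c, hdc'⟩)
  have hJ : ∀ k l : ℤ, J (k, (l : ZMod d)) = k • σ + l • c := by
    intro k l
    simp [J]
  have hJsurj : Function.Surjective J := by
    intro x
    obtain ⟨g, hg⟩ := QuotientGroup.mk_surjective x.toMul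
    have hle : φ.ker ≤ ((AddSubgroup.toSubgroup' J.range).comap Abelianization.of).map
        φ.ker.subtype := by
      refine (ker_le_closure_of_generators (BS_closure _ _) φ hφa hφt).trans ?_
      rw [Subgroup.closure_le]
      rintro y (rfl | rfl | rfl)
      · exact ⟨a', ⟨(0, ((2 * p + 1 : ℤ) : ZMod d)), by rw [hJ, hcu, zero_smul, zero_add]; rfl⟩,
          rfl⟩
      · exact ⟨b', ⟨(0, ((2 * p + 3 : ℤ) : ZMod d)), by rw [hJ, hcv, zero_smul, zero_add]; rfl⟩,
          rfl⟩
      · exact ⟨s', ⟨(1, ((0 : ℤ) : ZMod d)), by rw [hJ, one_smul, zero_smul, add_zero]; rfl⟩, rfl⟩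
    obtain ⟨g', ⟨y, hy⟩, hgg⟩ := hle g.2
    obtain rfl : g' = g := Subtype.ext hgg
    exact ⟨y, hy.trans hg⟩
  let F' : Additive (Abelianization φ.ker) →+ ℤ × ZMod d :=
    MonoidHom.toAdditiveLeft (Abelianization.lift F)
  have hFu : F' u = (0, ((2 * p + 1 : ℤ) : ZMod d)) := by
    change (F a').toAdd = _
    rw [hF]
    simp [a', ha]
  have hFv : F' v = (0, ((2 * p + 3 : ℤ) : ZMod d)) := by
    change (F b').toAdd = _
    rw [hF, BSToSemidirect_conj]
    simp
  have hFσ : F' σ = (2, 0) := by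
    change (F s').toAdd = _
    rw [hF]
    simp [s', ht]
  have hFc : F' c = (0, 1) := by
    simp only [c, map_sub, map_zsmul, hFu, hFv]
    ext
    · simp
    · simp
      ring
  have hJinj : Function.Injective J := by
    rw [injective_iff_map_eq_zero]
    rintro ⟨k, x⟩ h
    obtain ⟨l, rfl⟩ := ZMod.intCast_surjective x
    rw [hJ] at h
    have h' := congrArg F' h
    simp only [map_add, map_zsmul, hFσ, hFc, map_zero] at h'
    simpa using h'
  exact ⟨(AddEquiv.toMultiplicativeLeft
    (AddEquiv.ofBijective J ⟨hJinj, hJsurj⟩)).symm⟩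
end

section
/- For every integer n, the Baumslag–Solitar group B(n+2, n) = ⟨a, t ∣ t a^{n+2} t⁻¹ = a^n⟩ has a subgroup Γ' of index 2 whose abelianization A has no ℤ/2 direct summand, i.e. every x ∈ A with 2x = 0 satisfies x = 2y for some y ∈ A. -/
namespace BS

variable {m n : ℤ}

/-- The generator `a` of the Baumslag–Solitar group. -/
def a : BS m n := PresentedGroup.of 0

/-- The stable letter `t` of the Baumslag–Solitar group. -/
def t : BS m n := PresentedGroup.of 1

theorem t_mul_a_zpow_mul_t_inv : (t : BS m n) * a ^ m * t⁻¹ = a ^ n := by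
  have h : PresentedGroup.mk {BSRel m n} (BSRel m n) = 1 :=
    PresentedGroup.one_of_mem (Set.mem_singleton _)
  have map_rel : ∀ R : Set (FreeGroup (Fin 2)), PresentedGroup.mk R (BSRel m n) =
      PresentedGroup.of 1 * PresentedGroup.of 0 ^ m * (PresentedGroup.of 1)⁻¹ *
        PresentedGroup.of 0 ^ (-n) := by
    intro R
    simp only [BSRel, map_mul, map_zpow, map_inv]
    rfl
  rwa [map_rel, zpow_neg, mul_inv_eq_one] at h

theorem closure_a_t : Subgroup.closure {(a : BS m n), t} = ⊤ := by
  rw [← PresentedGroup.closure_range_of]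
  congr 1
  ext x
  simp [Fin.exists_fin_two, a, t, eq_comm]

/-- The homomorphism out of `B(m,n)` determined by images of `a` and `t` satisfying the relation. -/
def lift {H : Type*} [Group H] (x y : H) (h : y * x ^ m * y⁻¹ = x ^ n) : BS m n →* H :=
  PresentedGroup.toGroup (f := ![x, y]) (by
    rintro r rfl
    simp [BSRel, h])

@[simp]
theorem lift_a {H : Type*} [Group H] (x y : H) (h : y * x ^ m * y⁻¹ = x ^ n) :
    lift x y h a = x :=
  PresentedGroup.toGroup.of _

@[simp]
theorem lift_t {H : Type*} [Group H] (x y : H) (h : y * x ^ m * y⁻¹ = x ^ n) :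
    lift x y h t = y :=
  PresentedGroup.toGroup.of _

end BS

/-- The subgroup of rotations of a dihedral group. -/
def DihedralGroup.rotations (m : ℕ) : Subgroup (DihedralGroup m) where
  carrier := Set.range DihedralGroup.r
  one_mem' := ⟨0, rfl⟩
  mul_mem' := by
    rintro _ _ ⟨i, rfl⟩ ⟨j, rfl⟩
    exact ⟨i + j, rfl⟩
  inv_mem' := by
    rintro _ ⟨i, rfl⟩
    exact ⟨-i, rfl⟩

@[simp]
theorem DihedralGroup.r_mem_rotations {m : ℕ} (i : ZMod m) : r i ∈ rotations m := ⟨i, rfl⟩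

@[simp]
theorem DihedralGroup.sr_notMem_rotations {m : ℕ} (i : ZMod m) : sr i ∉ rotations m := by
  rintro ⟨j, hj⟩
  cases hj

theorem DihedralGroup.commute_of_mem_rotations {m : ℕ} {x y : DihedralGroup m}
    (hx : x ∈ rotations m) (hy : y ∈ rotations m) : Commute x y := by
  obtain ⟨i, rfl⟩ := hx
  obtain ⟨j, rfl⟩ := hy
  simp [Commute, SemiconjBy, add_comm]

theorem DihedralGroup.index_comap_rotations {G : Type*} [Group G] {m : ℕ}
    (φ : G →* DihedralGroup m) {c : G} {i : ZMod m} (hc : φ c = sr i) :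
    ((rotations m).comap φ).index = 2 := by
  rw [Subgroup.index_eq_two_iff]
  refine ⟨c, fun b => ?_⟩
  rw [Subgroup.mem_comap, Subgroup.mem_comap, map_mul, hc]
  cases φ b <;> simp

theorem Abelianization.map_eq_one_of_commute {G H : Type*} [Group G] [Group H] (f : G →* H)
    (hf : ∀ x y, Commute (f x) (f y)) {g : G} (hg : Abelianization.of g = 1) : f g = 1 := by
  have h : commutator G ≤ f.ker := by
    rw [commutator_def, Subgroup.commutator_le]
    intro x _ y _
    rw [MonoidHom.mem_ker, map_commutatorElement, commutatorElement_eq_one_iff_commute]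
    exact hf x y
  exact h ((QuotientGroup.eq_one_iff g).mp hg)

/-- If `G` is generated by `c` and `d`, and `Γ` is a subgroup containing `d`, `c * d * c⁻¹` and
`c * c` but not `c`, then these three elements generate the abelianization of `Γ`. -/
theorem Abelianization.exists_eq_zpow_mul_zpow_mul_zpow {G : Type*} [Group G] {c d : G}
    (hG : Subgroup.closure {c, d} = ⊤) {Γ : Subgroup G} (hc : c ∉ Γ) (hd : d ∈ Γ)
    (he : c * d * c⁻¹ ∈ Γ) (hs : c * c ∈ Γ) (x : Abelianization Γ) :
    ∃ i j k : ℤ, x = Abelianization.of ⟨d, hd⟩ ^ i * Abelianization.of ⟨c * d * c⁻¹, he⟩ ^ j *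
      Abelianization.of ⟨c * c, hs⟩ ^ k := by
  set D : Γ := ⟨d, hd⟩
  set E : Γ := ⟨c * d * c⁻¹, he⟩
  set S : Γ := ⟨c * c, hs⟩
  have key : ∀ g : G, ∃ w ∈ Subgroup.closure {D, E, S}, g = w ∨ g = w * c := by
    have hDm : D ∈ Subgroup.closure {D, E, S} := Subgroup.subset_closure (by simp)
    have hEm : E ∈ Subgroup.closure {D, E, S} := Subgroup.subset_closure (by simp)
    have hSm : S ∈ Subgroup.closure {D, E, S} := Subgroup.subset_closure (by simp)
    intro g
    have hg : g ∈ Subgroup.closure {c, d} := hG ▸ Subgroup.mem_top g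
    induction hg using Subgroup.closure_induction_right with
    | one => exact ⟨1, one_mem _, Or.inl rfl⟩
    | mul_right g _ y hy ih =>
      obtain ⟨w, hw, rfl | rfl⟩ := ih <;> obtain rfl | rfl := hy
      · exact ⟨w, hw, Or.inr rfl⟩
      · exact ⟨w * D, mul_mem hw hDm, Or.inl rfl⟩
      · exact ⟨w * S, mul_mem hw hSm, Or.inl (by simp [S, mul_assoc])⟩
      · exact ⟨w * E, mul_mem hw hEm, Or.inr (by simp [E, mul_assoc])⟩
    | mul_inv_cancel g _ y hy ih =>
      obtain ⟨w, hw, rfl | rfl⟩ := ih <;> obtain rfl | rfl := hy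
      · exact ⟨w * S⁻¹, mul_mem hw (inv_mem hSm), Or.inr (by simp [S, mul_assoc])⟩
      · exact ⟨w * D⁻¹, mul_mem hw (inv_mem hDm), Or.inl rfl⟩
      · exact ⟨w, hw, Or.inl (by simp)⟩
      · exact ⟨w * E⁻¹, mul_mem hw (inv_mem hEm), Or.inr (by simp [E, mul_assoc])⟩
  obtain ⟨g, rfl⟩ := QuotientGroup.mk_surjective x
  obtain ⟨w, hw, h | h⟩ := key g
  · obtain rfl : g = w := Subtype.ext h
    change ∃ i j k : ℤ, Abelianization.of g = _
    clear h
    induction hw using Subgroup.closure_induction with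
    | mem y hy =>
      obtain rfl | rfl | rfl := hy
      · exact ⟨1, 0, 0, by simp⟩
      · exact ⟨0, 1, 0, by simp⟩
      · exact ⟨0, 0, 1, by simp⟩
    | one => exact ⟨0, 0, 0, by simp⟩
    | mul y z _ _ hy hz =>
      obtain ⟨i, j, k, hy⟩ := hy
      obtain ⟨i', j', k', hz⟩ := hz
      refine ⟨i + i', j + j', k + k', ?_⟩
      rw [map_mul, hy, hz, zpow_add, zpow_add, zpow_add]
      simp only [mul_assoc, mul_left_comm]
    | inv y _ hy =>
      obtain ⟨i, j, k, hy⟩ := hy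
      refine ⟨-i, -j, -k, ?_⟩
      rw [map_inv, hy]
      simp only [zpow_neg, mul_inv]
  · refine absurd ?_ hc
    have : c = ((w⁻¹ * g : Γ) : G) := by simp [h]
    exact this ▸ (w⁻¹ * g).2

theorem eq_zpow_of_zpow_eq_zpow {A : Type*} [CommGroup A] {x y : A} {k : ℤ}
    (h₁ : y ^ (2 * k + 1 + 2) = x ^ (2 * k + 1)) (h₂ : x ^ (2 * k + 1 + 2) = y ^ (2 * k + 1)) :
    y = x ^ (4 * k + 3) := by
  have e₁ : (2 * k + 1 + 2) • Additive.ofMul y = (2 * k + 1) • Additive.ofMul x := h₁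
  have e₂ : (2 * k + 1 + 2) • Additive.ofMul x = (2 * k + 1) • Additive.ofMul y := h₂
  have : Additive.ofMul y = (4 * k + 3) • Additive.ofMul x := by
    linear_combination (norm := module) (-k) • e₁ + (-(k + 1)) • e₂
  exact this

namespace BS

open DihedralGroup

/-- The homomorphism `B(m,n) → ℤ` killing `a` and sending `t` to `1`. -/
def stableExponent (m n : ℤ) : BS m n →* Multiplicative ℤ :=
  lift 1 (Multiplicative.ofAdd 1) (by simp)

theorem exists_index_two_of_even (k : ℤ) :
    ∃ Γ : Subgroup (BS (k + k + 2) (k + k)), Γ.index = 2 ∧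
      ∀ x : Abelianization Γ, x ^ 2 = 1 → ∃ y : Abelianization Γ, x = y ^ 2 := by
  have hsr : (sr 0 : DihedralGroup 0) ^ 2 = 1 := by simp [pow_two]
  let φ : BS (k + k + 2) (k + k) →* DihedralGroup 0 := lift (sr 0) (r 1) (by
    rw [show k + k + 2 = 2 * (k + 1) by ring, show k + k = 2 * k by ring, zpow_mul, zpow_mul,
      zpow_ofNat, hsr]
    simp)
  have hφa : φ a = sr 0 := lift_a ..
  have hφt : φ t = r 1 := lift_t ..
  let Γ := (rotations 0).comap φ
  have ha : a ∉ Γ := by simp [Γ, hφa]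
  have ht : t ∈ Γ := by simp [Γ, hφt]
  have hu : a * t * a⁻¹ ∈ Γ := by simp [Γ, hφa, hφt]
  have hs : a * a ∈ Γ := by simp [Γ, hφa]
  refine ⟨Γ, index_comap_rotations φ hφa, fun x hx => ⟨1, ?_⟩⟩
  have hS : Abelianization.of (⟨a * a, hs⟩ : Γ) = 1 := by
    have hrel : (⟨t, ht⟩ : Γ) * ⟨a * a, hs⟩ ^ (k + 1) * ⟨t, ht⟩⁻¹ = ⟨a * a, hs⟩ ^ k := by
      apply Subtype.ext
      have h : (t : BS (k + k + 2) (k + k)) * a ^ (2 * (k + 1)) * t⁻¹ = a ^ (2 * k) := by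
        rw [show 2 * (k + 1) = k + k + 2 by ring, show 2 * k = k + k by ring]
        exact t_mul_a_zpow_mul_t_inv
      simp only [Subgroup.coe_mul, Subgroup.coe_zpow, Subgroup.coe_inv]
      rwa [zpow_mul, zpow_mul, zpow_two] at h
    have h := congrArg Abelianization.of hrel
    rw [map_mul, map_mul, map_inv, mul_inv_cancel_comm, map_zpow, map_zpow, zpow_add_one] at h
    simpa using h
  obtain ⟨i, j, l, rfl⟩ :=
    Abelianization.exists_eq_zpow_mul_zpow_mul_zpow closure_a_t ha ht hu hs x
  rw [hS, one_zpow, mul_one] at hx ⊢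
  rw [← map_zpow, ← map_zpow, ← map_mul, ← map_pow] at hx
  have h₁ := Abelianization.map_eq_one_of_commute (φ.comp Γ.subtype)
    (fun x y => commute_of_mem_rotations x.2 y.2) hx
  have h₂ := congrArg Multiplicative.toAdd <|
    Abelianization.map_eq_one_of_commute ((stableExponent _ _).comp Γ.subtype)
      (fun x y => Commute.all _ _) hx
  simp [hφa, hφt, pow_two, one_def, -r_zero] at h₁
  simp [stableExponent] at h₂
  have h₃ : i + -j = 0 := by exact_mod_cast h₁
  obtain rfl : i = 0 := by lia
  obtain rfl : j = 0 := by lia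
  simp

theorem exists_index_two_of_odd (k : ℤ) :
    ∃ Γ : Subgroup (BS (2 * k + 1 + 2) (2 * k + 1)), Γ.index = 2 ∧
      ∀ x : Abelianization Γ, x ^ 2 = 1 → ∃ y : Abelianization Γ, x = y ^ 2 := by
  let φ : BS (2 * k + 1 + 2) (2 * k + 1) →* DihedralGroup 4 := lift (r 1) (sr 0) (by
    simp only [r_zpow, one_mul, sr_mul_r, inv_sr, sr_mul_sr, zero_add, zero_sub]
    congr 1
    push_cast
    have h4 : (4 : ZMod 4) = 0 := rfl
    linear_combination (-(k : ZMod 4) - 1) * h4)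
  have hφa : φ a = r 1 := lift_a ..
  have hφt : φ t = sr 0 := lift_t ..
  let Γ := (rotations 4).comap φ
  have ht : t ∉ Γ := by simp [Γ, hφt]
  have ha : a ∈ Γ := by simp [Γ, hφa]
  have hb : t * a * t⁻¹ ∈ Γ := by simp [Γ, hφa, hφt]
  have hs : t * t ∈ Γ := by simp [Γ, hφt]
  refine ⟨Γ, index_comap_rotations φ hφt, fun x hx => ?_⟩
  have hrel := t_mul_a_zpow_mul_t_inv (m := 2 * k + 1 + 2) (n := 2 * k + 1)
  have hB : Abelianization.of (⟨t * a * t⁻¹, hb⟩ : Γ) =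
      Abelianization.of (⟨a, ha⟩ : Γ) ^ (4 * k + 3) := by
    have h₁ : (⟨t * a * t⁻¹, hb⟩ : Γ) ^ (2 * k + 1 + 2) = ⟨a, ha⟩ ^ (2 * k + 1) :=
      Subtype.ext (by simpa only [Subgroup.coe_zpow, conj_zpow] using hrel)
    have h₂ : (⟨t * t, hs⟩ : Γ) * ⟨a, ha⟩ ^ (2 * k + 1 + 2) * ⟨t * t, hs⟩⁻¹ =
        ⟨t * a * t⁻¹, hb⟩ ^ (2 * k + 1) := by
      apply Subtype.ext
      simp only [Subgroup.coe_mul, Subgroup.coe_zpow, Subgroup.coe_inv, conj_zpow, ← hrel]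
      group
    have h₁ := congrArg Abelianization.of h₁
    have h₂ := congrArg Abelianization.of h₂
    rw [map_zpow, map_zpow] at h₁
    rw [map_mul, map_mul, map_inv, mul_inv_cancel_comm, map_zpow, map_zpow] at h₂
    exact eq_zpow_of_zpow_eq_zpow h₁ h₂
  obtain ⟨i, j, l, rfl⟩ := Abelianization.exists_eq_zpow_mul_zpow_mul_zpow
    (by rw [Set.pair_comm, closure_a_t]) ht ha hb hs x
  rw [hB, ← zpow_mul, ← zpow_add] at hx ⊢
  generalize i + (4 * k + 3) * j = i at hx ⊢
  rw [← map_zpow, ← map_zpow, ← map_mul, ← map_pow] at hx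
  have h₁ := Abelianization.map_eq_one_of_commute (φ.comp Γ.subtype)
    (fun x y => commute_of_mem_rotations x.2 y.2) hx
  have h₂ := congrArg Multiplicative.toAdd <|
    Abelianization.map_eq_one_of_commute ((stableExponent _ _).comp Γ.subtype)
      (fun x y => Commute.all _ _) hx
  simp [hφa, hφt, pow_two, one_def, -r_zero] at h₁
  simp [stableExponent] at h₂
  have h₃ : (4 : ℤ) ∣ i + i :=
    (ZMod.intCast_zmod_eq_zero_iff_dvd (i + i) 4).mp (by exact_mod_cast h₁)
  obtain ⟨q, rfl⟩ : (2 : ℤ) ∣ i := by lia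
  refine ⟨Abelianization.of ⟨a, ha⟩ ^ q, ?_⟩
  rw [h₂, zpow_zero, mul_one, zpow_mul', zpow_ofNat]

end BS

theorem stmt_7 (n : ℤ) :
    ∃ Γ' : Subgroup (BS (n + 2) n), Γ'.index = 2 ∧
      ∀ x : Abelianization ↥Γ', x ^ 2 = 1 → ∃ y : Abelianization ↥Γ', x = y ^ 2 := by
  obtain ⟨k, rfl⟩ | ⟨k, rfl⟩ := Int.even_or_odd n
  · exact BS.exists_index_two_of_even k
  · exact BS.exists_index_two_of_odd k
end

section
/- Let p be an integer and k ≥ 1 an integer, and let Γ = G_{2p, 2p+2, k} = ⟨a, t ∣ t^k a^{2p} t^{−k} = a^{2p+2}⟩. Let θ : Γ → ℤ/2 be the group homomorphism determined by θ(a) = 1 and θ(t) = 0 (well defined since the relator has exponent sum −2 in a and 0 in t), and let Γ' = ker θ. Then Γ' has index 2 in Γ and the abelianization of Γ' is isomorphic to ℤ × ℤ, the free abelian group of rank 2. -/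
/-- The relator `t^k a^m t^{-k} a^{-n}` of the Baumslag–Strebel group, in the free
group on two generators, where `a` is `FreeGroup.of 0` and `t` is `FreeGroup.of 1`. -/
def BStRel (m n k : ℤ) : FreeGroup (Fin 2) :=
  FreeGroup.of 1 ^ k * FreeGroup.of 0 ^ m * FreeGroup.of 1 ^ (-k) * FreeGroup.of 0 ^ (-n)

/-- The Baumslag–Strebel group `G_{m,n,k} = ⟨a, t ∣ t^k a^m t^{-k} = a^n⟩`. -/
abbrev BSt (m n k : ℤ) : Type :=
  PresentedGroup ({BStRel m n k} : Set (FreeGroup (Fin 2)))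

namespace BSt

/-- The action of `ℤ/2` on `ℤ × ℤ` exchanging the two factors. -/
def swapHom : Multiplicative (ZMod 2) →* MulAut (Multiplicative (ℤ × ℤ)) where
  toFun x := if x = 1 then 1 else AddEquiv.toMultiplicative (AddEquiv.prodComm (M := ℤ) (N := ℤ))
  map_one' := by simp
  map_mul' x y := by
    have key : ∀ z : Multiplicative (ZMod 2), z = 1 ∨ z = Multiplicative.ofAdd 1 := by decide
    have hne : (Multiplicative.ofAdd (1 : ZMod 2)) ≠ 1 := by decide
    have hmul : (Multiplicative.ofAdd (1 : ZMod 2)) * Multiplicative.ofAdd 1 = 1 := by decide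
    rcases key x with rfl | rfl <;> rcases key y with rfl | rfl <;> simp [hne, hmul]
    ext z <;> rfl

/-- The wreath product `ℤ ≀ ℤ/2`. -/
abbrev Wreath : Type := Multiplicative (ℤ × ℤ) ⋊[swapHom] Multiplicative (ZMod 2)

/-- The images of `a` and `t` in the wreath product `ℤ ≀ ℤ/2`. -/
def wreathGen : Fin 2 → Wreath :=
  ![SemidirectProduct.inr (Multiplicative.ofAdd 1),
    SemidirectProduct.inl (Multiplicative.ofAdd (1, 0))]

lemma wreathGen_zero_sq : wreathGen 0 ^ (2 : ℤ) = 1 := by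
  have h : (Multiplicative.ofAdd (1 : ZMod 2)) ^ (2 : ℤ) = 1 := by decide
  rw [wreathGen, Matrix.cons_val_zero, ← map_zpow, h, map_one]

lemma lift_wreathGen_relator (p k : ℤ) :
    ∀ r ∈ ({BStRel (2 * p) (2 * p + 2) k} : Set (FreeGroup (Fin 2))),
      FreeGroup.lift wreathGen r = 1 := by
  rintro r rfl
  have h : -(2 * p + 2) = 2 * (-(p + 1)) := by ring
  simp only [BStRel, map_mul, map_zpow, FreeGroup.lift_apply_of]
  rw [h, zpow_mul, zpow_mul, wreathGen_zero_sq, one_zpow, one_zpow, mul_one, mul_one, ← zpow_add,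
    add_neg_cancel, zpow_zero]

/-- The homomorphism `G_{2p, 2p+2, k} → ℤ ≀ ℤ/2` killing `a²`. -/
def toWreath (p k : ℤ) : BSt (2 * p) (2 * p + 2) k →* Wreath :=
  PresentedGroup.toGroup (lift_wreathGen_relator p k)

lemma toWreath_of (p k : ℤ) (i : Fin 2) :
    toWreath p k (PresentedGroup.of i) = wreathGen i :=
  PresentedGroup.toGroup.of _

lemma relation (m n k : ℤ) :
    (PresentedGroup.of 1 : BSt m n k) ^ k * PresentedGroup.of 0 ^ m * PresentedGroup.of 1 ^ (-k) =
      PresentedGroup.of 0 ^ n := by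
  have h : PresentedGroup.mk ({BStRel m n k} : Set (FreeGroup (Fin 2))) (BStRel m n k) = 1 :=
    PresentedGroup.one_of_mem rfl
  rw [← mul_inv_eq_one, ← zpow_neg, ← h]
  rfl

/-- A subgroup containing `t`, `a t a⁻¹` and `a²` has at most the two cosets of `1` and `a⁻¹`. -/
lemma mem_or_mul_mem {m n k : ℤ} (M : Subgroup (BSt m n k))
    (ht : PresentedGroup.of 1 ∈ M)
    (hs : PresentedGroup.of 0 * PresentedGroup.of 1 * (PresentedGroup.of 0)⁻¹ ∈ M)
    (hb : PresentedGroup.of 0 * PresentedGroup.of 0 ∈ M) (x : BSt m n k) :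
    x ∈ M ∨ x * PresentedGroup.of 0 ∈ M := by
  set a : BSt m n k := PresentedGroup.of 0
  set t : BSt m n k := PresentedGroup.of 1
  have hx : x ∈ Subgroup.closure
      (Set.range (PresentedGroup.of : Fin 2 → BSt m n k)) := by
    rw [PresentedGroup.closure_range_of]; trivial
  have hu : a⁻¹ * t * a ∈ M := by
    have := M.mul_mem (M.mul_mem (M.inv_mem hb) hs) hb
    convert this using 1
    group
  induction hx using Subgroup.closure_induction_right with
  | one => exact Or.inl M.one_mem
  | mul_right x _ y hy ih =>
    obtain ⟨i, rfl⟩ := hy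
    fin_cases i
    · change x * a ∈ M ∨ x * a * a ∈ M
      rcases ih with h | h
      · right; rw [mul_assoc]; exact M.mul_mem h hb
      · exact Or.inl h
    · change x * t ∈ M ∨ x * t * a ∈ M
      rcases ih with h | h
      · exact Or.inl (M.mul_mem h ht)
      · right
        convert M.mul_mem h hu using 1
        group
  | mul_inv_cancel x _ y hy ih =>
    obtain ⟨i, rfl⟩ := hy
    fin_cases i
    · change x * a⁻¹ ∈ M ∨ x * a⁻¹ * a ∈ M
      rcases ih with h | h
      · right; simpa using h
      · left
        convert M.mul_mem h (M.inv_mem hb) using 1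
        group
    · change x * t⁻¹ ∈ M ∨ x * t⁻¹ * a ∈ M
      rcases ih with h | h
      · exact Or.inl (M.mul_mem h (M.inv_mem ht))
      · right
        convert M.mul_mem h (M.inv_mem hu) using 1
        group

end BSt

theorem stmt_9 (p k : ℤ) (hk : 1 ≤ k)
    (θ : BSt (2 * p) (2 * p + 2) k →* Multiplicative (ZMod 2))
    (hθa : θ (PresentedGroup.of 0) = Multiplicative.ofAdd 1)
    (hθt : θ (PresentedGroup.of 1) = Multiplicative.ofAdd 0) :
    (MonoidHom.ker θ).index = 2 ∧
      Nonempty (Abelianization ↥(MonoidHom.ker θ) ≃* Multiplicative (ℤ × ℤ)) := by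
  have hne : (Multiplicative.ofAdd (1 : ZMod 2)) ≠ 1 := by decide
  have hmul : (Multiplicative.ofAdd (1 : ZMod 2)) * Multiplicative.ofAdd 1 = 1 := by decide
  have htwo : ∀ z : Multiplicative (ZMod 2), z = 1 ∨ z = Multiplicative.ofAdd 1 := by decide
  rw [ofAdd_zero] at hθt
  constructor
  · have hsurj : Function.Surjective θ := fun z => by
      rcases htwo z with rfl | rfl
      · exact ⟨1, map_one θ⟩
      · exact ⟨_, hθa⟩
    rw [Subgroup.index_ker, MonoidHom.range_eq_top.mpr hsurj, Subgroup.card_top]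
    simp
  have hright : SemidirectProduct.rightHom.comp (BSt.toWreath p k) = θ := by
    refine PresentedGroup.ext fun i => ?_
    fin_cases i
    · simp [BSt.toWreath_of, BSt.wreathGen, hθa]
    · simp [BSt.toWreath_of, BSt.wreathGen, hθt]
  have hker (x : θ.ker) : (BSt.toWreath p k x).right = 1 :=
    (DFunLike.congr_fun hright x.1).trans x.2
  let f : θ.ker →* Multiplicative (ℤ × ℤ) :=
    { toFun x := (BSt.toWreath p k x).left
      map_one' := by simp
      map_mul' x y := by simp [hker x] }
  set a : BSt (2 * p) (2 * p + 2) k := PresentedGroup.of 0 with ha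
  set t : BSt (2 * p) (2 * p + 2) k := PresentedGroup.of 1 with ht
  let T : θ.ker := ⟨t, hθt⟩
  let S : θ.ker := ⟨a * t * a⁻¹, by simp [MonoidHom.mem_ker, hθt]⟩
  let B : θ.ker := ⟨a * a, by simp [MonoidHom.mem_ker, hθa, hmul]⟩
  have hfT : f T = Multiplicative.ofAdd (1, 0) := by
    change (BSt.toWreath p k t).left = _
    rw [ht, BSt.toWreath_of]; rfl
  have hfS : f S = Multiplicative.ofAdd (0, 1) := by
    change (BSt.toWreath p k (a * t * a⁻¹)).left = _
    rw [map_mul, map_mul, map_inv, ht, ha, BSt.toWreath_of, BSt.toWreath_of]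
    rfl
  have hB : Abelianization.of B = 1 := by
    have h : T ^ k * B ^ p * T ^ (-k) = B ^ (p + 1) := by
      ext
      have := BSt.relation (2 * p) (2 * p + 2) k
      have e : a ^ (2 * p + 2) = (a * a) ^ (p + 1) := by
        rw [← zpow_two, ← zpow_mul, mul_add, mul_one]
      rw [← ha, ← ht, e, zpow_mul, zpow_two] at this
      simpa [T, B] using this
    have h' := congrArg Abelianization.of h
    rw [map_mul, map_mul, map_zpow, map_zpow, map_zpow, map_zpow, mul_right_comm, ← zpow_add,
      add_neg_cancel, zpow_zero, one_mul, zpow_add_one] at h'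
    exact left_eq_mul.mp h'
  let g : Multiplicative (ℤ × ℤ) →* Abelianization θ.ker :=
    { toFun x := Abelianization.of T ^ x.toAdd.1 * Abelianization.of S ^ x.toAdd.2
      map_one' := by simp
      map_mul' x y := by
        simp only [toAdd_mul, Prod.fst_add, Prod.snd_add, zpow_add]
        exact mul_mul_mul_comm _ _ _ _ }
  have hfg (x) : Abelianization.lift f (g x) = x := by
    simp only [g, MonoidHom.coe_mk, OneHom.coe_mk, map_mul, map_zpow, Abelianization.lift_apply_of,
      hfT, hfS]
    apply Multiplicative.toAdd.injective
    ext <;> simp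
  have hg : Function.Surjective g := by
    let M := (g.range.comap Abelianization.of).map θ.ker.subtype
    have hT : t ∈ M := ⟨T, ⟨Multiplicative.ofAdd (1, 0), by simp [g]⟩, rfl⟩
    have hS : a * t * a⁻¹ ∈ M := ⟨S, ⟨Multiplicative.ofAdd (0, 1), by simp [g]⟩, rfl⟩
    have hBM : a * a ∈ M := ⟨B, ⟨1, by rw [map_one, hB]⟩, rfl⟩
    intro x
    obtain ⟨x, rfl⟩ := QuotientGroup.mk_surjective x
    rcases BSt.mem_or_mul_mem M hT hS hBM x with ⟨y, hy, hyx⟩ | ⟨y, -, hyx⟩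
    · obtain rfl : y = x := Subtype.ext hyx
      exact hy
    · have h : θ (x * a) = 1 := by rw [← ha] at hyx; rw [← hyx]; exact y.2
      rw [map_mul, show θ x = 1 from x.2, one_mul, hθa] at h
      exact absurd h hne
  exact ⟨(MulEquiv.ofBijective g ⟨Function.LeftInverse.injective hfg, hg⟩).symm⟩
end

section
/- Let p ≥ 1 and l ≥ 1 be integers, set k = 2l−1, and let Γ = G_{2p−1, 2p+1, k} = ⟨a, t ∣ t^k a^{2p−1} t^{−k} = a^{2p+1}⟩. Let θ : Γ → ℤ/2 be the group homomorphism determined by θ(a) = 0 and θ(t) = 1 (well defined since the relator has exponent sum −2 in a and 0 in t), and let Γ' = ker θ. Then Γ' has index 2 in Γ and the abelianization of Γ' is isomorphic to ℤ × ℤ/(8p). -/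
section GroupRelations

variable {G : Type*} [Group G] {a t : G} {p l : ℤ}

/-- Modulo commutation of `a` with `t ^ 2`, conjugation by an odd power of `t` is
conjugation by `t`. -/
lemma conj_zpow_odd_eq_conj (h : Commute (t ^ 2) a) (m : ℤ) :
    t ^ (2 * l - 1) * a ^ m * t ^ (-(2 * l - 1)) = t * a ^ m * t⁻¹ := by
  have hc : Commute ((t ^ 2) ^ (l - 1)) (a ^ m) := h.zpow_zpow _ _
  have ht : t ^ (2 * l - 1) = t * (t ^ 2) ^ (l - 1) := by
    rw [← zpow_natCast, ← zpow_mul, ← zpow_one_add]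
    congr 1
    push_cast
    ring
  rw [zpow_neg, ht, mul_inv_rev, mul_assoc t, hc.eq]
  group

/-- The two relations `b ^ m = a ^ n` and `a ^ m = b ^ n` with
`m = 2p - 1` and `n = 2p + 1`, determine `b` and bound the order of `a`. -/
lemma eq_zpow_and_zpow_eq_one {b : G}
    (h₁ : b ^ (2 * p - 1) = a ^ (2 * p + 1)) (h₂ : a ^ (2 * p - 1) = b ^ (2 * p + 1)) :
    b = a ^ (4 * p - 1) ∧ a ^ (8 * p) = 1 := by
  have hsq : b ^ (2 : ℤ) = a ^ (-2 : ℤ) := by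
    have e₁ : b ^ (2 : ℤ) = b ^ (2 * p + 1) * (b ^ (2 * p - 1))⁻¹ := by
      rw [← zpow_neg, ← zpow_add]; congr 1; ring
    rw [e₁, h₁, ← h₂, ← zpow_neg, ← zpow_add]
    congr 1
    ring
  have hb : b = a ^ (4 * p - 1) := by
    have e₁ : b = b ^ (2 * p - 1) * (b ^ (2 : ℤ)) ^ (1 - p) := by
      rw [← zpow_mul, ← zpow_add]
      conv_lhs => rw [← zpow_one b]
      congr 1
      ring
    rw [e₁, h₁, hsq, ← zpow_mul, ← zpow_add]
    congr 1
    ring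
  refine ⟨hb, ?_⟩
  have e₂ : a ^ (8 * p) = (a ^ (4 * p - 1)) ^ (2 : ℤ) * (a ^ (-2 : ℤ))⁻¹ := by
    rw [← zpow_mul, ← zpow_neg, ← zpow_add]; congr 1; ring
  rw [e₂, ← hb, hsq, mul_inv_cancel]

/-- The relator of the Baumslag–Strebel group in a group in which `a` and `t ^ 2` commute. -/
lemma conj_eq_zpow_and_zpow_eq_one (ht : Commute (t ^ 2) a)
    (h : t ^ (2 * l - 1) * a ^ (2 * p - 1) * t ^ (-(2 * l - 1)) = a ^ (2 * p + 1)) :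
    t * a * t⁻¹ = a ^ (4 * p - 1) ∧ a ^ (8 * p) = 1 := by
  rw [conj_zpow_odd_eq_conj ht] at h
  refine eq_zpow_and_zpow_eq_one (by rw [conj_zpow, h]) ?_
  rw [conj_zpow, ← h]
  have hc := (ht.zpow_right (2 * p - 1)).eq
  have e : t * (t * a ^ (2 * p - 1) * t⁻¹) * t⁻¹ = t ^ 2 * a ^ (2 * p - 1) * (t ^ 2)⁻¹ := by
    simp only [pow_two, mul_inv_rev, mul_assoc]
  rw [e, hc, mul_inv_cancel_right]

end GroupRelations

section Model

/-- The homomorphism `x ↦ (4p - 1) x` of `ℤ/(8p)`. -/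
def twistHom (p : ℤ) :
    Multiplicative (ZMod (8 * p).natAbs) →* Multiplicative (ZMod (8 * p).natAbs) :=
  zpowGroupHom (4 * p - 1)

lemma eight_mul_eq_zero (p : ℤ) : (8 * p : ZMod (8 * p).natAbs) = 0 := by
  have h : ((8 * p : ℤ) : ZMod (8 * p).natAbs) = 0 := by
    rw [ZMod.intCast_zmod_eq_zero_iff_dvd]
    exact Int.natAbs_dvd.mpr dvd_rfl
  simpa using h

lemma twistHom_ofAdd (p : ℤ) (x : ZMod (8 * p).natAbs) :
    twistHom p (Multiplicative.ofAdd x) = Multiplicative.ofAdd ((4 * p - 1) * x) := by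
  simp [twistHom, ← ofAdd_zsmul]

lemma twistHom_comp_twistHom (p : ℤ) :
    (twistHom p).comp (twistHom p) = MonoidHom.id _ := by
  refine MonoidHom.ext fun x => ?_
  induction x with | ofAdd x
  simp only [MonoidHom.comp_apply, twistHom_ofAdd, MonoidHom.id_apply]
  congr 1
  linear_combination ((2 * p - 1) * x) * eight_mul_eq_zero p

/-- The involution `x ↦ (4p - 1) x` of `ℤ/(8p)`, as an automorphism. -/
def twist (p : ℤ) : MulAut (Multiplicative (ZMod (8 * p).natAbs)) :=
  (twistHom p).toMulEquiv (twistHom p) (twistHom_comp_twistHom p) (twistHom_comp_twistHom p)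

lemma twist_ofAdd (p : ℤ) (x : ZMod (8 * p).natAbs) :
    twist p (Multiplicative.ofAdd x) = Multiplicative.ofAdd ((4 * p - 1) * x) :=
  twistHom_ofAdd p x

lemma twist_sq (p : ℤ) : twist p ^ (2 : ℤ) = 1 := by
  ext1 x
  exact DFunLike.congr_fun (twistHom_comp_twistHom p) x

/-- The metabelian group `ℤ/(8p) ⋊ ℤ`, where the generator of `ℤ` acts by `x ↦ (4p - 1) x`. -/
abbrev TwistedProduct (p : ℤ) : Type :=
  Multiplicative (ZMod (8 * p).natAbs) ⋊[zpowersHom _ (twist p)] Multiplicative ℤ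

open SemidirectProduct in
/-- The quotient map from the Baumslag–Strebel group to `ℤ/(8p) ⋊ ℤ`. -/
def toTwistedProduct (p l : ℤ) :
    BSt (2 * p - 1) (2 * p + 1) (2 * l - 1) →* TwistedProduct p :=
  PresentedGroup.toGroup
    (f := ![inl (Multiplicative.ofAdd 1), inr (Multiplicative.ofAdd 1)]) <| by
    have h : twist p ^ (2 * l - 1) = twist p := by
      rw [zpow_sub, zpow_mul, twist_sq, one_zpow, zpow_one, one_mul]
      exact inv_eq_of_mul_eq_one_left ((zpow_two _).symm.trans (twist_sq p))
    rintro r rfl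
    simp only [BStRel, map_mul, map_zpow, FreeGroup.lift_apply_of, Matrix.cons_val_zero,
      Matrix.cons_val_one]
    rw [zpow_neg, zpow_neg, mul_inv_eq_one, ← map_zpow inr, ← map_zpow inl, ← map_zpow inl,
      ← map_inv inr, ← inl_aut]
    congr 1
    simp only [zpowersHom_apply, toAdd_ofAdd, smul_eq_mul, mul_one, h,
      ← ofAdd_zsmul, twist_ofAdd]
    congr 1
    push_cast [zsmul_eq_mul]
    linear_combination (p - 1) * eight_mul_eq_zero p

lemma toTwistedProduct_of_zero (p l : ℤ) : toTwistedProduct p l (PresentedGroup.of 0) =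
    SemidirectProduct.inl (Multiplicative.ofAdd 1) :=
  PresentedGroup.toGroup.of _

lemma toTwistedProduct_of_one (p l : ℤ) : toTwistedProduct p l (PresentedGroup.of 1) =
    SemidirectProduct.inr (Multiplicative.ofAdd 1) :=
  PresentedGroup.toGroup.of _

/-- The homomorphism `ℤ/(8p) ⋊ ℤ → G` determined by elements `a`, `t` of `G` with
`a ^ (8p) = 1` and `t a t⁻¹ = a ^ (4p - 1)`. -/
lemma exists_hom_twistedProduct {G : Type*} [Group G] {p : ℤ} (a t : G) (ha : a ^ (8 * p) = 1)
    (hat : t * a * t⁻¹ = a ^ (4 * p - 1)) :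
    ∃ f : TwistedProduct p →* G, f (SemidirectProduct.inl (Multiplicative.ofAdd 1)) = a ∧
      f (SemidirectProduct.inr (Multiplicative.ofAdd 1)) = t := by
  let f₀ : ZMod (8 * p).natAbs →+ Additive G :=
    ZMod.lift _ ⟨zmultiplesHom (Additive G) (Additive.ofMul a), by
      rw [zmultiplesHom_apply, ← ofMul_zpow]
      rcases Int.natAbs_eq (8 * p) with h | h
      · rw [← h, ha, ofMul_one]
      · rw [← neg_eq_iff_eq_neg.mpr h, zpow_neg, ha, inv_one, ofMul_one]⟩
  have hf₀ (n : ℤ) : f₀ n = Additive.ofMul (a ^ n) := by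
    simp [f₀]
  let fn : Multiplicative (ZMod (8 * p).natAbs) →* G := AddMonoidHom.toMultiplicativeLeft f₀
  have hfn (n : ℤ) : fn (Multiplicative.ofAdd (n : ZMod (8 * p).natAbs)) = a ^ n :=
    congrArg Additive.toMul (hf₀ n)
  let fg : Multiplicative ℤ →* G := zpowersHom G t
  have h₁ (x : Multiplicative (ZMod (8 * p).natAbs)) : fn (twist p x) = t * fn x * t⁻¹ := by
    induction x with | ofAdd x
    obtain ⟨n, rfl⟩ := ZMod.intCast_surjective x
    rw [twist_ofAdd, hfn, ← conj_zpow, hat, ← zpow_mul, ← hfn]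
    push_cast
    rfl
  have h₂ (n : ℤ) (x : Multiplicative (ZMod (8 * p).natAbs)) :
      fn ((twist p ^ n) x) = t ^ n * fn x * (t ^ n)⁻¹ := by
    induction n generalizing x with
    | zero => simp
    | succ n ih => rw [zpow_add_one, MulAut.mul_apply, ih, h₁, zpow_add_one]; group
    | pred n ih =>
      have h₃ : fn ((twist p)⁻¹ x) = t⁻¹ * fn x * t := by
        have := h₁ ((twist p)⁻¹ x)
        rw [MulAut.apply_inv_self] at this
        rw [this]
        group
      rw [zpow_sub_one, MulAut.mul_apply, ih, h₃, zpow_sub_one]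
      group
  refine ⟨SemidirectProduct.lift fn fg fun g => MonoidHom.ext fun x => h₂ g.toAdd x, ?_, ?_⟩
  · simpa using hfn 1
  · simp [fg]

end Model

section Kernel

variable {p l : ℤ} {θ : BSt (2 * p - 1) (2 * p + 1) (2 * l - 1) →* Multiplicative (ZMod 2)}

lemma commute_mk_of_mem {G : Type*} [Group G] {H : Subgroup G} [H.Normal] {x y : G}
    (hx : x ∈ H) (hy : y ∈ H) : Commute (x : G ⧸ ⁅H, H⁆) (y : G ⧸ ⁅H, H⁆) := by
  rw [← commutatorElement_eq_one_iff_commute, ← QuotientGroup.mk'_apply,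
    ← QuotientGroup.mk'_apply, ← map_commutatorElement, QuotientGroup.mk'_apply,
    QuotientGroup.eq_one_iff]
  exact Subgroup.commutator_mem_commutator hx hy

lemma of_relation (m n k : ℤ) : (PresentedGroup.of 1 ^ k * PresentedGroup.of 0 ^ m *
    PresentedGroup.of 1 ^ (-k) : BSt m n k) = PresentedGroup.of 0 ^ n := by
  rw [← mul_inv_eq_one, ← zpow_neg]
  exact PresentedGroup.one_of_mem (Set.mem_singleton (BStRel m n k))

/-- The kernel of the map to `ℤ/(8p) ⋊ ℤ` consists of products of commutators of `ker θ`. -/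
lemma ker_toTwistedProduct_le (hθa : θ (PresentedGroup.of 0) = Multiplicative.ofAdd 0)
    (hθt : θ (PresentedGroup.of 1) = Multiplicative.ofAdd 1) :
    (toTwistedProduct p l).ker ≤ ⁅θ.ker, θ.ker⁆ := by
  let q := QuotientGroup.mk' ⁅θ.ker, θ.ker⁆
  have hc : Commute (q (PresentedGroup.of 1) ^ 2) (q (PresentedGroup.of 0)) := by
    rw [← map_pow]
    refine commute_mk_of_mem ?_ hθa
    rw [MonoidHom.mem_ker, map_pow, hθt]
    rfl
  have hrel := congrArg q (of_relation (2 * p - 1) (2 * p + 1) (2 * l - 1))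
  simp only [map_mul, map_zpow] at hrel
  obtain ⟨h₁, h₂⟩ := conj_eq_zpow_and_zpow_eq_one hc hrel
  obtain ⟨f, hfa, hft⟩ := exists_hom_twistedProduct _ _ h₂ h₁
  have hcomp : f.comp (toTwistedProduct p l) = q := by
    refine PresentedGroup.ext fun i => ?_
    fin_cases i
    · exact (congrArg f (toTwistedProduct_of_zero p l)).trans hfa
    · exact (congrArg f (toTwistedProduct_of_one p l)).trans hft
  intro x hx
  rw [← QuotientGroup.eq_one_iff, ← QuotientGroup.mk'_apply]
  change q x = 1
  rw [← hcomp, MonoidHom.comp_apply, MonoidHom.mem_ker.mp hx, map_one]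

/-- `θ` is the parity of the exponent of `t`. -/
lemma mem_ker_iff_even (hθa : θ (PresentedGroup.of 0) = Multiplicative.ofAdd 0)
    (hθt : θ (PresentedGroup.of 1) = Multiplicative.ofAdd 1)
    (x : BSt (2 * p - 1) (2 * p + 1) (2 * l - 1)) :
    x ∈ θ.ker ↔ Even (toTwistedProduct p l x).right.toAdd := by
  have h : θ = ((Int.castAddHom (ZMod 2)).toMultiplicative.comp
      SemidirectProduct.rightHom).comp (toTwistedProduct p l) := by
    refine PresentedGroup.ext fun i => ?_
    fin_cases i
    · simp [hθa, toTwistedProduct_of_zero]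
    · simp [hθt, toTwistedProduct_of_one]
  rw [MonoidHom.mem_ker, h, ← ZMod.intCast_eq_zero_iff_even]
  exact Iff.rfl

/-- The map `ker θ → ℤ × ℤ/(8p)` recording half the exponent of `t` and the `ℤ/(8p)`-component. -/
def kerToProd (h : ∀ x ∈ θ.ker, Even (toTwistedProduct p l x).right.toAdd) :
    θ.ker →* Multiplicative (ℤ × ZMod (8 * p).natAbs) where
  toFun x := Multiplicative.ofAdd
    ((toTwistedProduct p l x).right.toAdd / 2, (toTwistedProduct p l x).left.toAdd)
  map_one' := by simp
  map_mul' x y := by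
    obtain ⟨c, hc⟩ := (h x x.2).two_dvd
    have htriv : zpowersHom _ (twist p) (toTwistedProduct p l x).right = 1 := by
      rw [zpowersHom_apply, hc, zpow_mul, twist_sq, one_zpow]
    simp only [Subgroup.coe_mul, map_mul, SemidirectProduct.mul_left, htriv,
      SemidirectProduct.mul_right, toAdd_mul, MulAut.one_apply, ← ofAdd_add, Prod.mk_add_mk]
    rw [Int.add_ediv_of_dvd_left (h x x.2).two_dvd]

end Kernel

theorem stmt_11 (p l : ℤ) (hp : 1 ≤ p) (hl : 1 ≤ l)
    (θ : BSt (2 * p - 1) (2 * p + 1) (2 * l - 1) →* Multiplicative (ZMod 2))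
    (hθa : θ (PresentedGroup.of 0) = Multiplicative.ofAdd 0)
    (hθt : θ (PresentedGroup.of 1) = Multiplicative.ofAdd 1) :
    (MonoidHom.ker θ).index = 2 ∧
      Nonempty (Abelianization ↥(MonoidHom.ker θ) ≃*
        Multiplicative (ℤ × ZMod (8 * p).natAbs)) := by
  constructor
  · have hsurj : Function.Surjective θ := fun x => by
      obtain ⟨n, hn⟩ := ZMod.intCast_surjective x.toAdd
      refine ⟨PresentedGroup.of 1 ^ n, ?_⟩
      rw [map_zpow, hθt, ← ofAdd_zsmul, zsmul_one, hn, ofAdd_toAdd]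
    rw [Subgroup.index_ker, MonoidHom.range_eq_top.mpr hsurj, Subgroup.card_top]
    simp
  have heven := mem_ker_iff_even hθa hθt
  let φ := kerToProd fun x hx => (heven x).mp hx
  refine ⟨MulEquiv.ofBijective (Abelianization.lift φ) ⟨?_, ?_⟩⟩
  · rw [injective_iff_map_eq_one]
    intro x hx
    obtain ⟨x, rfl⟩ := QuotientGroup.mk_surjective x
    change φ x = 1 at hx
    have hx' := Prod.ext_iff.mp (congrArg Multiplicative.toAdd hx)
    have hker : (x : BSt (2 * p - 1) (2 * p + 1) (2 * l - 1)) ∈ (toTwistedProduct p l).ker := by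
      refine SemidirectProduct.ext hx'.2 ?_
      exact Int.eq_zero_of_ediv_eq_zero ((heven x).mp x.2).two_dvd hx'.1
    have hcomm := ker_toTwistedProduct_le hθa hθt hker
    rw [← Subgroup.map_subtype_commutator] at hcomm
    obtain ⟨y, hy, hyx⟩ := hcomm
    rw [← Subtype.ext hyx]
    exact (QuotientGroup.eq_one_iff y).mpr hy
  · intro z
    obtain ⟨i, j⟩ := z
    obtain ⟨j, rfl⟩ := ZMod.intCast_surjective j
    let g : BSt (2 * p - 1) (2 * p + 1) (2 * l - 1) :=
      PresentedGroup.of 0 ^ j * PresentedGroup.of 1 ^ (2 * i)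
    have hg : toTwistedProduct p l g = ⟨Multiplicative.ofAdd (j : ZMod (8 * p).natAbs),
        Multiplicative.ofAdd (2 * i)⟩ := by
      rw [map_mul, map_zpow, map_zpow, toTwistedProduct_of_zero, toTwistedProduct_of_one,
        ← map_zpow SemidirectProduct.inl, ← map_zpow SemidirectProduct.inr, ← ofAdd_zsmul,
        ← ofAdd_zsmul, SemidirectProduct.mk_eq_inl_mul_inr]
      simp
    have hgker : g ∈ θ.ker := (heven g).mpr (by rw [hg]; exact even_two_mul i)
    refine ⟨Abelianization.of ⟨g, hgker⟩, ?_⟩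
    rw [Abelianization.lift_apply_of]
    change Multiplicative.ofAdd ((toTwistedProduct p l g).right.toAdd / 2,
      (toTwistedProduct p l g).left.toAdd) = _
    rw [hg, toAdd_ofAdd, toAdd_ofAdd, Int.mul_ediv_cancel_left _ two_ne_zero]
    rfl
end

section
/- For every integer n ≥ 1 and every integer k ≥ 1, the Baumslag–Strebel group G_{n, n+2, k} = ⟨a, t ∣ t^k a^n t^{−k} = a^{n+2}⟩ has a subgroup Γ' of index 2 whose abelianization A has no ℤ/2 direct summand, i.e. every x ∈ A with 2x = 0 satisfies x = 2y for some y ∈ A. -/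
open Subgroup

/-- The index-two subgroup `Γ` of a group generated by `u ∉ Γ` and `v ∈ Γ` is generated by
`u ^ 2`, `v` and `u * v * u⁻¹`. -/
theorem Subgroup.eq_closure_of_index_two {G : Type*} [Group G] {Γ : Subgroup G}
    (hΓ : Γ.index = 2) {u v : G} (hu : u ∉ Γ) (hv : v ∈ Γ) (huv : closure {u, v} = ⊤) :
    Γ = closure {u ^ 2, v, u * v * u⁻¹} := by
  have := normal_of_index_eq_two hΓ
  set H := closure {u ^ 2, v, u * v * u⁻¹} with hH
  have hb : u ^ 2 ∈ H := subset_closure (by simp)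
  have h0 : v ∈ H := subset_closure (by simp)
  have h1 : u * v * u⁻¹ ∈ H := subset_closure (by simp)
  have hle : H ≤ Γ := by
    rw [hH, closure_le]
    rintro x (rfl | rfl | rfl)
    · exact sq_mem_of_index_two hΓ u
    · exact hv
    · exact this.conj_mem _ hv u
  have key : ∀ g : G, g ∈ H ∨ u * g ∈ H := by
    intro g
    have hg : g ∈ closure {u, v} := huv ▸ mem_top g
    induction hg using closure_induction_left with
    | one => exact Or.inl (one_mem _)
    | mul_left x hx y _ ih =>
      rcases hx with rfl | rfl
      · rcases ih with ih | ih
        · right; convert mul_mem hb ih using 1; rw [sq, mul_assoc]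
        · exact Or.inl ih
      · rcases ih with ih | ih
        · exact Or.inl (mul_mem h0 ih)
        · right; convert mul_mem h1 ih using 1; group
    | inv_mul_cancel x hx y _ ih =>
      rcases hx with rfl | rfl
      · rcases ih with ih | ih
        · right; simpa using ih
        · left; convert mul_mem (inv_mem hb) ih using 1; group
      · rcases ih with ih | ih
        · exact Or.inl (mul_mem (inv_mem h0) ih)
        · right; convert mul_mem (inv_mem h1) ih using 1; group
  refine le_antisymm (fun g hg => (key g).resolve_right fun h => hu ?_) hle
  exact (Γ.mul_mem_cancel_right hg).1 (hle h)

/-- The abelianization of a group generated by three elements consists of the products of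
powers of their classes. -/
theorem Abelianization.exists_eq_of_zpow_mul_zpow_mul_zpow {G : Type*} [Group G]
    {Γ : Subgroup G} {b c d : Γ} (h : Γ = closure {(b : G), (c : G), (d : G)})
    (x : Abelianization Γ) : ∃ p q r : ℤ, x = of (b ^ p * c ^ q * d ^ r) := by
  induction x using QuotientGroup.induction_on with | H z => ?_
  change ∃ p q r : ℤ, of z = _
  obtain ⟨g, hg⟩ := z
  have hg' := hg
  rw [h] at hg'
  induction hg' using closure_induction with
  | mem x hx =>
    rcases hx with rfl | rfl | rfl
    · exact ⟨1, 0, 0, by simp⟩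
    · exact ⟨0, 1, 0, by simp⟩
    · exact ⟨0, 0, 1, by simp⟩
  | one => exact ⟨0, 0, 0, (map_one of).trans (by simp)⟩
  | mul x y hx hy ihx ihy =>
    rw [← h] at hx hy
    obtain ⟨p, q, r, hx'⟩ := ihx hx
    obtain ⟨p', q', r', hy'⟩ := ihy hy
    refine ⟨p + p', q + q', r + r', ?_⟩
    have : (⟨x * y, hg⟩ : Γ) = ⟨x, hx⟩ * ⟨y, hy⟩ := rfl
    rw [this, map_mul, hx', hy']
    simp only [map_mul, map_zpow, zpow_add]
    ac_rfl
  | inv x hx ihx =>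
    rw [← h] at hx
    obtain ⟨p, q, r, hx'⟩ := ihx hx
    refine ⟨-p, -q, -r, ?_⟩
    have : (⟨x⁻¹, hg⟩ : Γ) = ⟨x, hx⟩⁻¹ := rfl
    rw [this, map_inv, hx']
    simp only [map_mul, map_zpow, map_inv, zpow_neg, mul_inv]

/-- A homomorphism mapping `Γ` into a cyclic subgroup kills the elements of `Γ` that are trivial
in the abelianization of `Γ`. -/
theorem Abelianization.map_eq_one_of_le_comap_zpowers {G D : Type*} [Group G] [Group D]
    {Γ : Subgroup G} (f : G →* D) {c : D} (h : Γ ≤ (zpowers c).comap f) {w : Γ}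
    (hw : of w = 1) : f w = 1 := by
  have hw' : w ∈ commutator Γ := by rwa [← Abelianization.ker_of]
  suffices commutator Γ ≤ (f.comp Γ.subtype).ker from this hw'
  rw [commutator_def, commutator_le]
  rintro x - y -
  obtain ⟨i, hi⟩ := h x.2
  obtain ⟨j, hj⟩ := h y.2
  rw [MonoidHom.mem_ker, map_commutatorElement, commutatorElement_eq_one_iff_commute]
  simp only [MonoidHom.comp_apply, subtype_apply, ← hi, ← hj]
  exact ((Commute.refl c).zpow_zpow i j)

namespace BSt

variable {m n k : ℤ}

/-- Elements satisfying the Baumslag–Strebel relation define a homomorphism. -/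
theorem exists_hom {H : Type*} [Group H] (x y : H) (h : y ^ k * x ^ m * y ^ (-k) = x ^ n) :
    ∃ f : BSt m n k →* H, f (PresentedGroup.of 0) = x ∧ f (PresentedGroup.of 1) = y := by
  have hr : ∀ r ∈ ({BStRel m n k} : Set (FreeGroup (Fin 2))), FreeGroup.lift ![x, y] r = 1 := by
    rintro r rfl
    simp only [BStRel, map_mul, map_zpow, FreeGroup.lift_apply_of]
    simp [← h]
  exact ⟨PresentedGroup.toGroup hr, by simp, by simp⟩

theorem rel : (PresentedGroup.of 1 : BSt m n k) ^ k * PresentedGroup.of 0 ^ m *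
    PresentedGroup.of 1 ^ (-k) = PresentedGroup.of 0 ^ n := by
  have h := PresentedGroup.one_of_mem (rels := {BStRel m n k}) (x := BStRel m n k) rfl
  refine mul_inv_eq_one.1 (Eq.trans ?_ h)
  rw [← zpow_neg]
  rfl

theorem closure_eq_top :
    closure {(PresentedGroup.of 0 : BSt m n k), PresentedGroup.of 1} = ⊤ := by
  rw [← PresentedGroup.closure_range_of]
  congr 1
  ext x
  simp [Fin.exists_fin_two, eq_comm]

/-- The exponent sum of `t`. -/
theorem exists_exponent_hom : ∃ f : BSt m n k →* Multiplicative ℤ,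
    f (PresentedGroup.of 0) = 1 ∧ f (PresentedGroup.of 1) = Multiplicative.ofAdd 1 :=
  exists_hom _ _ (by simp)

end BSt

/-- The kernel of a homomorphism to `ℤ/2` that is nontrivial at `u` has index two. -/
theorem MonoidHom.index_ker_eq_two {G : Type*} [Group G] (φ : G →* Multiplicative (ZMod 2))
    {u : G} (hu : φ u = Multiplicative.ofAdd 1) : φ.ker.index = 2 := by
  have hs : Function.Surjective φ := by
    intro z
    obtain rfl | rfl : z = 1 ∨ z = Multiplicative.ofAdd 1 := by revert z; decide
    · exact ⟨1, map_one φ⟩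
    · exact ⟨u, hu⟩
  rw [Subgroup.index_ker, φ.range_eq_top.2 hs, card_top, Nat.card_eq_fintype_card]
  rfl

/-- If `x` inverts `y` and `x ^ 2 = y ^ (2 * k)`, then `y ^ k` conjugates odd powers of `x` as in
the Baumslag–Strebel relation. -/
theorem zpow_conj_zpow_eq_of_inverts_of_sq_eq {H : Type*} [Group H] {x y : H} {k m : ℤ}
    (hxy : x * y * x⁻¹ = y⁻¹) (hx : x ^ (2 : ℤ) = y ^ (2 * k)) :
    y ^ k * x ^ (2 * m + 1) * y ^ (-k) = x ^ (2 * m + 1 + 2) := by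
  have h : x * y ^ (-k) = y ^ k * x := by
    rw [← mul_inv_eq_iff_eq_mul, ← conj_zpow, hxy, inv_zpow', neg_neg]
  rw [show 2 * m + 1 + 2 = 2 * (m + 1) + 1 by ring]
  simp only [zpow_add_one x, zpow_mul x, hx, ← zpow_mul]
  rw [← mul_assoc, mul_assoc _ x, h, ← zpow_add, ← mul_assoc, ← zpow_add]
  ring_nf

/-- The Baumslag–Strebel relation with odd exponents, rewritten in terms of `a ^ 2`, `t` and
`a * t * a⁻¹`. -/
theorem zpow_mul_conj_eq_sq {H : Type*} [Group H] {a t : H} {k m : ℤ}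
    (h : t ^ k * a ^ (2 * m + 1) * t ^ (-k) = a ^ (2 * m + 1 + 2)) :
    t ^ k * (a ^ 2) ^ m * (a * t ^ (-k) * a⁻¹) * (a ^ 2) ^ (-m) = a ^ 2 := by
  have ha : (a ^ 2) ^ m = a ^ (2 * m) := by rw [zpow_mul]; norm_cast
  rw [zpow_neg (a ^ 2), ha]
  calc _ = t ^ k * a ^ (2 * m + 1) * t ^ (-k) * (a⁻¹ * (a ^ (2 * m))⁻¹) := by
        simp only [zpow_add_one, mul_assoc]
    _ = a ^ (2 : ℤ) := by rw [h]; group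
    _ = a ^ 2 := zpow_ofNat a 2

/-- A criterion for the existence of a 2-avoiding subgroup of index two. The homomorphisms `ψ` and
`f` provide the constraints on the exponents of an involution. -/
theorem exists_index_two_of_hom {G D : Type*} [Group G] [Group D] {u v : G}
    (huv : closure {u, v} = ⊤) (φ : G →* Multiplicative (ZMod 2))
    (hu : φ u = Multiplicative.ofAdd 1) (hv : φ v = 1)
    (ψ : G →* Multiplicative ℤ) (f : G →* D) (hfu : f u ^ 2 ∈ zpowers (f v))
    (hf : f u * f v * (f u)⁻¹ = (f v)⁻¹)
    (H : ∀ b c d : φ.ker, (b : G) = u ^ 2 → (c : G) = v → (d : G) = u * v * u⁻¹ →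
      ∀ p q r : ℤ, ψ u ^ (4 * p) * ψ v ^ (2 * (q + r)) = 1 →
        (f u ^ 2) ^ (2 * p) * f v ^ (2 * (q - r)) = 1 →
        ∃ y : Abelianization φ.ker, Abelianization.of (b ^ p * c ^ q * d ^ r) = y ^ 2) :
    ∃ Γ' : Subgroup G, Γ'.index = 2 ∧
      ∀ x : Abelianization ↥Γ', x ^ 2 = 1 → ∃ y : Abelianization ↥Γ', x = y ^ 2 := by
  have hidx := φ.index_ker_eq_two hu
  have hgen := Subgroup.eq_closure_of_index_two hidx (u := u) (v := v)
    (by rw [MonoidHom.mem_ker, hu]; decide) (MonoidHom.mem_ker.2 hv) huv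
  refine ⟨φ.ker, hidx, fun x hx => ?_⟩
  let b : φ.ker := ⟨u ^ 2, sq_mem_of_index_two hidx u⟩
  let c : φ.ker := ⟨v, MonoidHom.mem_ker.2 hv⟩
  let d : φ.ker := ⟨u * v * u⁻¹, φ.normal_ker.conj_mem _ hv u⟩
  obtain ⟨p, q, r, rfl⟩ :=
    Abelianization.exists_eq_of_zpow_mul_zpow_mul_zpow (b := b) (c := c) (d := d) hgen x
  have hw : Abelianization.of (b ^ (2 * p) * c ^ (2 * q) * d ^ (2 * r)) = 1 := by
    rw [← hx]
    simp only [map_mul, map_zpow, mul_comm (2 : ℤ), zpow_mul, mul_pow]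
    norm_cast
  refine H b c d rfl rfl rfl p q r ?_ ?_
  · have h := congrArg (Abelianization.lift (ψ.comp φ.ker.subtype)) hw
    simp only [Abelianization.lift_apply_of, map_one, map_mul, map_zpow, MonoidHom.comp_apply,
      subtype_apply, b, c, d, map_pow, map_inv, mul_inv_cancel_comm] at h
    rw [← h, mul_assoc, ← zpow_add, ← zpow_natCast, ← zpow_mul]
    ring_nf
  · have hle : φ.ker ≤ (zpowers (f v)).comap f := by
      rw [hgen, closure_le]
      rintro x (rfl | rfl | rfl)
      · simpa using hfu
      · simp
      · simp [hf]
    have h := Abelianization.map_eq_one_of_le_comap_zpowers f hle hw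
    simp only [coe_mul, coe_zpow, map_mul, map_zpow, b, c, d, map_pow, map_inv, hf] at h
    rw [← h, mul_assoc, inv_zpow', ← zpow_add]
    ring_nf

theorem stmt_12 (n k : ℤ) (hn : 1 ≤ n) (hk : 1 ≤ k) :
    ∃ Γ' : Subgroup (BSt n (n + 2) k), Γ'.index = 2 ∧
      ∀ x : Abelianization ↥Γ', x ^ 2 = 1 → ∃ y : Abelianization ↥Γ', x = y ^ 2 := by
  have hrel := BSt.rel (m := n) (n := n + 2) (k := k)
  have htop := BSt.closure_eq_top (m := n) (n := n + 2) (k := k)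
  obtain ⟨ψ, hψa, hψt⟩ := BSt.exists_exponent_hom (m := n) (n := n + 2) (k := k)
  have htwo : Multiplicative.ofAdd (1 : ZMod 2) ^ (2 : ℤ) = 1 := by decide
  obtain ⟨α, hαa, hαt⟩ := BSt.exists_hom (m := n) (n := n + 2) (k := k)
    (Multiplicative.ofAdd (1 : ZMod 2)) 1 (by simp [zpow_add, htwo])
  rcases Int.even_or_odd' n with ⟨m, rfl | rfl⟩
  · have hsr : (DihedralGroup.sr 0 : DihedralGroup 0) ^ (2 : ℤ) = 1 := by decide
    obtain ⟨f, hfa, hft⟩ := BSt.exists_hom (m := 2 * m) (n := 2 * m + 2) (k := k)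
      (DihedralGroup.sr 0 : DihedralGroup 0) (DihedralGroup.r 1)
      (by simp [zpow_add, zpow_mul, hsr])
    refine exists_index_two_of_hom htop α hαa hαt ψ f ?_ ?_ ?_
    · rw [hfa]; exact ⟨0, by simpa using hsr.symm⟩
    · rw [hfa, hft]; decide
    · intro b c d hb hc hd p q r h₁ h₂
      have hb1 : Abelianization.of b = 1 := by
        have h : c ^ k * b ^ m * c ^ (-k) = b ^ (m + 1) := by
          apply Subtype.ext
          simp only [coe_mul, coe_zpow, hb, hc]
          convert hrel using 1 <;> rw [← zpow_natCast, ← zpow_mul] <;> ring_nf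
        have h := congrArg Abelianization.of h
        simp only [map_mul, map_zpow, zpow_neg, zpow_add, zpow_one] at h
        simpa using h
      have h₁' : q + r = 0 := by
        rw [hψa, hψt, one_zpow, one_mul, ← ofAdd_zsmul, ofAdd_eq_one] at h₁
        simpa using h₁
      have h₂' : q - r = 0 := by
        rw [hfa, hft, ← zpow_natCast, Nat.cast_ofNat, hsr, one_zpow, one_mul,
          ← orderOf_dvd_iff_zpow_eq_one, DihedralGroup.orderOf_r_one] at h₂
        simpa using h₂
      obtain rfl : q = 0 := by lia
      obtain rfl : r = 0 := by lia
      exact ⟨1, by simp [hb1]⟩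
  rcases Int.even_or_odd' k with ⟨l, rfl | rfl⟩
  · lift l to ℕ using by lia
    have : NeZero l := ⟨by rintro rfl; simp at hk⟩
    have hx2 : (QuaternionGroup.xa 0 : QuaternionGroup (4 * l)) ^ (2 : ℤ) =
        QuaternionGroup.a 1 ^ (2 * (2 * (l : ℤ))) := by
      have h : (2 * (2 * (l : ℤ))) = ((4 * l : ℕ) : ℤ) := by push_cast; ring
      rw [h, zpow_natCast, QuaternionGroup.a_one_pow, zpow_ofNat, QuaternionGroup.xa_sq]
    have hconj : (QuaternionGroup.xa 0 : QuaternionGroup (4 * l)) * QuaternionGroup.a 1 *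
        (QuaternionGroup.xa 0)⁻¹ = (QuaternionGroup.a 1)⁻¹ := by
      rw [mul_inv_eq_iff_eq_mul, QuaternionGroup.xa_mul_a]
      exact (congrArg QuaternionGroup.xa (by simp)).trans (QuaternionGroup.a_mul_xa (-1) 0).symm
    obtain ⟨f, hfa, hft⟩ := BSt.exists_hom (m := 2 * m + 1) (n := 2 * m + 1 + 2)
      (k := 2 * (l : ℤ)) (QuaternionGroup.xa 0 : QuaternionGroup (4 * l)) (QuaternionGroup.a 1)
      (zpow_conj_zpow_eq_of_inverts_of_sq_eq hconj hx2)
    refine exists_index_two_of_hom htop α hαa hαt ψ f ?_ ?_ ?_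
    · rw [hfa, hft]; exact ⟨_, by simpa using hx2.symm⟩
    · rw [hfa, hft, hconj]
    · intro b c d hb hc hd p q r h₁ h₂
      have hb1 : Abelianization.of b =
          Abelianization.of c ^ (2 * (l : ℤ)) * Abelianization.of d ^ (-(2 * (l : ℤ))) := by
        have h : c ^ (2 * (l : ℤ)) * b ^ m * d ^ (-(2 * (l : ℤ))) * b ^ (-m) = b := by
          apply Subtype.ext
          simp only [coe_mul, coe_zpow, hb, hc, hd, conj_zpow]
          exact zpow_mul_conj_eq_sq hrel
        have h := congrArg Abelianization.of h
        simp only [map_mul, map_zpow] at h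
        rw [← h, zpow_neg _ m, mul_right_comm, mul_inv_cancel_right]
      have h₁' : q + r = 0 := by
        rw [hψa, hψt, one_zpow, one_mul, ← ofAdd_zsmul, ofAdd_eq_one] at h₁
        simpa using h₁
      obtain rfl : r = -q := by lia
      have h₂' : 4 * (2 * (l : ℤ)) ∣ 4 * (2 * l * p + q) := by
        rw [hfa, hft, ← zpow_natCast, Nat.cast_ofNat, hx2, ← zpow_mul, ← zpow_add,
          ← orderOf_dvd_iff_zpow_eq_one, QuaternionGroup.orderOf_a_one] at h₂
        convert h₂ using 1 <;> push_cast <;> ring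
      obtain ⟨s, hs⟩ := Int.dvd_of_mul_dvd_mul_left (by simp) h₂'
      refine ⟨(Abelianization.of c * (Abelianization.of d)⁻¹) ^ (l * s), ?_⟩
      rw [← zpow_natCast, ← zpow_mul, Nat.cast_ofNat,
        show l * s * 2 = 2 * l * p + q by rw [hs]; ring]
      simp only [map_mul, map_zpow, hb1, mul_zpow, ← zpow_mul, inv_zpow', zpow_add, neg_mul]
      ac_rfl
  · have hsr : (DihedralGroup.sr 0 : DihedralGroup 4) ^ (2 : ℤ) = 1 := by decide
    have hr4 : (DihedralGroup.r 1 : DihedralGroup 4) ^ (4 : ℤ) = 1 := by decide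
    obtain ⟨β, hβa, hβt⟩ := BSt.exists_hom (m := 2 * m + 1) (n := 2 * m + 1 + 2)
      (k := 2 * l + 1) 1 (Multiplicative.ofAdd (1 : ZMod 2)) (by simp [-neg_add_rev, zpow_neg])
    obtain ⟨f, hfa, hft⟩ := BSt.exists_hom (m := 2 * m + 1) (n := 2 * m + 1 + 2)
      (k := 2 * l + 1) (DihedralGroup.r 1 : DihedralGroup 4) (DihedralGroup.sr 0)
      (by
        rw [zpow_neg, zpow_add, zpow_mul, hsr, one_zpow, one_mul, zpow_one, ← conj_zpow,
          show DihedralGroup.sr 0 * DihedralGroup.r 1 * (DihedralGroup.sr 0)⁻¹ =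
            (DihedralGroup.r 1 : DihedralGroup 4)⁻¹ by decide, inv_zpow', ← mul_inv_eq_one,
          ← zpow_neg, ← zpow_add, show -(2 * m + 1) + -(2 * m + 1 + 2) = 4 * (-m - 1) by ring,
          zpow_mul, hr4, one_zpow])
    refine exists_index_two_of_hom (Set.pair_comm _ _ ▸ htop) β hβt hβa ψ f ?_ ?_ ?_
    · rw [hft]; exact ⟨0, by simpa using hsr.symm⟩
    · rw [hfa, hft]; decide
    · intro b c d hb hc hd p q r h₁ h₂
      have hd1 : Abelianization.of d = Abelianization.of c *
          (Abelianization.of c ^ (m + 1) * Abelianization.of d ^ (-m)) ^ 2 := by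
        have h : b ^ l * d ^ (2 * m + 1) * b ^ (-l) = c ^ (2 * m + 1 + 2) := by
          apply Subtype.ext
          simp only [coe_mul, coe_zpow, hb, hc, hd, conj_zpow]
          rw [← hrel, ← zpow_natCast, Nat.cast_ofNat]
          group
        have h := congrArg Abelianization.of h
        simp only [map_mul, map_zpow] at h
        generalize Abelianization.of b = B at *
        generalize Abelianization.of c = C at *
        generalize Abelianization.of d = D at *
        rw [mul_right_comm, zpow_neg B, mul_inv_cancel, one_mul] at h
        calc D = D ^ (2 * m + 1) * D ^ (-(2 * m)) := by rw [← zpow_add]; simp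
          _ = C * (C ^ (m + 1) * D ^ (-m)) ^ 2 := by
            rw [h, ← zpow_natCast, mul_zpow, ← zpow_mul, ← zpow_mul, ← mul_assoc, ← zpow_one_add]
            ring_nf
      obtain rfl : p = 0 := by
        rw [hψa, hψt, one_zpow, mul_one, ← ofAdd_zsmul, ofAdd_eq_one] at h₁
        simpa using h₁
      have h₂' : (4 : ℤ) ∣ 2 * (q - r) := by
        rw [hfa, hft, mul_zero, zpow_zero, one_mul,
          ← orderOf_dvd_iff_zpow_eq_one, DihedralGroup.orderOf_r_one] at h₂
        exact_mod_cast h₂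
      obtain ⟨s, hs⟩ : (2 : ℤ) ∣ q + r := by lia
      simp only [map_mul, map_zpow, zpow_zero, one_mul]
      generalize Abelianization.of c ^ (m + 1) * Abelianization.of d ^ (-m) = E at hd1
      refine ⟨Abelianization.of c ^ s * E ^ r, ?_⟩
      simp only [← zpow_natCast, Nat.cast_ofNat] at hd1 ⊢
      rw [hd1, mul_zpow, ← mul_assoc, ← zpow_add, hs, mul_zpow, ← zpow_mul, ← zpow_mul, ← zpow_mul,
        mul_comm 2 s, mul_comm 2 r]
end

section
/- Let p ≥ 0 be an integer and let Γ = BG(2p+2, 2p) = ⟨a, t ∣ t a t⁻¹ a^{2p+2} t a⁻¹ t⁻¹ = a^{2p}⟩. Let θ : Γ → ℤ/2 be the group homomorphism determined by θ(a) = 1 and θ(t) = 1 (well defined since the relator has exponent sum 2 in a and 0 in t), and let Γ' = ker θ. Then Γ' has index 2 in Γ and the abelianization of Γ' is isomorphic to ℤ × ℤ, the free abelian group of rank 2. -/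
/-- The relator `t a t⁻¹ a^m t a⁻¹ t⁻¹ a^{-n}` of the Baumslag–Gersten group, in the
free group on two generators, where `a` is `FreeGroup.of 0` and `t` is `FreeGroup.of 1`. -/
def BGRel (m n : ℤ) : FreeGroup (Fin 2) :=
  FreeGroup.of 1 * FreeGroup.of 0 * (FreeGroup.of 1)⁻¹ * FreeGroup.of 0 ^ m *
    FreeGroup.of 1 * (FreeGroup.of 0)⁻¹ * (FreeGroup.of 1)⁻¹ * FreeGroup.of 0 ^ (-n)

/-- The Baumslag–Gersten group `BG(m,n) = ⟨a, t ∣ t a t⁻¹ a^m t a⁻¹ t⁻¹ = a^n⟩`. -/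
abbrev BG (m n : ℤ) : Type :=
  PresentedGroup ({BGRel m n} : Set (FreeGroup (Fin 2)))

namespace BaumslagGersten

/-- If `a` and `t` generate `G`, then the right cosets of `1` and `a` by a subgroup
containing `a²`, `t a⁻¹` and `a t` cover `G`. -/
lemma mem_or_mul_inv_mem_of_closure_eq_top {G : Type*} [Group G] {a t : G}
    (hgen : Subgroup.closure {a, t} = ⊤) {H : Subgroup G} (hx : a * a ∈ H)
    (hy : t * a⁻¹ ∈ H) (hz : a * t ∈ H) (g : G) : g ∈ H ∨ g * a⁻¹ ∈ H := by
  have hg : g ∈ Subgroup.closure {a, t} := hgen ▸ Subgroup.mem_top g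
  induction hg using Subgroup.closure_induction_right with
  | one => exact Or.inl H.one_mem
  | mul_right g _ s hs ih =>
    rcases hs with rfl | rfl <;> rcases ih with h | h
    · exact Or.inr (by simpa using h)
    · exact Or.inl (by simpa using H.mul_mem h hx)
    · exact Or.inr (by simpa [mul_assoc] using H.mul_mem h hy)
    · exact Or.inl (by simpa [mul_assoc] using H.mul_mem h hz)
  | mul_inv_cancel g _ s hs ih =>
    rcases hs with rfl | rfl <;> rcases ih with h | h
    · exact Or.inr (by simpa [mul_assoc] using H.mul_mem h (H.inv_mem hx))
    · exact Or.inl h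
    · exact Or.inr (by simpa [mul_assoc] using H.mul_mem h (H.inv_mem hz))
    · exact Or.inl (by simpa [mul_assoc] using H.mul_mem h (H.inv_mem hy))

/-- The automorphism of `ℤ × ℤ` exchanging the two factors. -/
def swapAut : MulAut (Multiplicative (ℤ × ℤ)) :=
  AddEquiv.toMultiplicative AddEquiv.prodComm

/-- The action of `ℤ/2` on `ℤ × ℤ` by exchanging the two factors. -/
def swapAction : Multiplicative (ZMod 2) →* MulAut (Multiplicative (ℤ × ℤ)) where
  toFun g := if g = 1 then 1 else swapAut
  map_one' := by simp
  map_mul' g h := by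
    have hs : swapAut * swapAut = 1 := rfl
    have key : ∀ g h : Multiplicative (ZMod 2), g ≠ 1 → h ≠ 1 → g * h = 1 := by decide
    by_cases hg : g = 1 <;> by_cases hh : h = 1 <;> simp [hg, hh, key, hs]

/-- The semidirect product of `ℤ × ℤ` by the exchange of factors. -/
abbrev SwapProduct : Type :=
  Multiplicative (ℤ × ℤ) ⋊[swapAction] Multiplicative (ZMod 2)

/-- The images of the generators `a` and `t` in `SwapProduct`. -/
def genImage : Fin 2 → SwapProduct :=
  ![⟨1, Multiplicative.ofAdd 1⟩, ⟨Multiplicative.ofAdd (1, 0), Multiplicative.ofAdd 1⟩]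

lemma genImage_zero_zpow (k : ℤ) : genImage 0 ^ (2 * k) = 1 := by
  have h : genImage 0 ^ (2 : ℤ) = 1 := by
    rw [zpow_two]
    rfl
  rw [zpow_mul, h, one_zpow]

variable (p : ℤ)

/-- The homomorphism from `BG (2p+2) 2p` to `SwapProduct` sending `a` and `t` to `genImage`. -/
def toSwapProduct : BG (2 * p + 2) (2 * p) →* SwapProduct :=
  PresentedGroup.toGroup (f := genImage) <| by
    rintro r rfl
    have h1 : genImage 0 ^ (2 * p + 2) = 1 := by
      rw [← genImage_zero_zpow (p + 1), mul_add, mul_one]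
    simp only [BGRel, map_mul, map_inv, map_zpow, FreeGroup.lift_apply_of, zpow_neg,
      genImage_zero_zpow, h1]
    group

lemma toSwapProduct_of (i : Fin 2) :
    toSwapProduct p (PresentedGroup.of i) = genImage i :=
  PresentedGroup.toGroup.of _

variable {p}

lemma toSwapProduct_right {θ : BG (2 * p + 2) (2 * p) →* Multiplicative (ZMod 2)}
    (hθa : θ (PresentedGroup.of 0) = Multiplicative.ofAdd 1)
    (hθt : θ (PresentedGroup.of 1) = Multiplicative.ofAdd 1) (g : BG (2 * p + 2) (2 * p)) :
    (toSwapProduct p g).right = θ g := by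
  have h : SemidirectProduct.rightHom.comp (toSwapProduct p) = θ := by
    refine PresentedGroup.ext fun i => ?_
    fin_cases i
    · simp [toSwapProduct_of, hθa, genImage]
    · simp [toSwapProduct_of, hθt, genImage]
  exact DFunLike.congr_fun h g

/-- The relation of `BG (2p+2) 2p`, written in the index-two subgroup generated by
`a²`, `t a⁻¹` and `a t`. -/
lemma relation (p : ℤ) :
    let a : BG (2 * p + 2) (2 * p) := PresentedGroup.of 0
    let t : BG (2 * p + 2) (2 * p) := PresentedGroup.of 1
    (t * a⁻¹ * (a * a)) * ((a * t)⁻¹ * (a * a) ^ (p + 1) * (a * t)) *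
      (t * a⁻¹ * (a * a))⁻¹ = (a * a) ^ p := by
  intro a t
  have h : t * a * t⁻¹ * a ^ (2 * p + 2) * t * a⁻¹ * t⁻¹ * a ^ (-(2 * p)) = 1 :=
    PresentedGroup.one_of_mem (rels := {BGRel (2 * p + 2) (2 * p)}) rfl
  have h' : t * a * t⁻¹ * a ^ (2 * p + 2) * t * a⁻¹ * t⁻¹ = a ^ (2 * p) := by
    rwa [zpow_neg, mul_inv_eq_one] at h
  have hz (k : ℤ) : (a * a) ^ k = a ^ (2 * k) := by rw [zpow_mul, zpow_two]
  rw [hz, hz, ← h', mul_add, mul_one]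
  group

end BaumslagGersten

open BaumslagGersten in
theorem stmt_14 (p : ℤ) (hp : 0 ≤ p)
    (θ : BG (2 * p + 2) (2 * p) →* Multiplicative (ZMod 2))
    (hθa : θ (PresentedGroup.of 0) = Multiplicative.ofAdd 1)
    (hθt : θ (PresentedGroup.of 1) = Multiplicative.ofAdd 1) :
    (MonoidHom.ker θ).index = 2 ∧
      Nonempty (Abelianization ↥(MonoidHom.ker θ) ≃* Multiplicative (ℤ × ℤ)) := by
  constructor
  · have hsurj : Function.Surjective θ := by
      have key : ∀ c : Multiplicative (ZMod 2), c = 1 ∨ c = Multiplicative.ofAdd 1 := by decide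
      intro c
      rcases key c with rfl | rfl
      · exact ⟨1, map_one θ⟩
      · exact ⟨_, hθa⟩
    rw [Subgroup.index_ker, MonoidHom.range_eq_top.2 hsurj]
    simp
  have hrel := relation p
  have hFa := toSwapProduct_of p 0
  have hFt := toSwapProduct_of p 1
  set a : BG (2 * p + 2) (2 * p) := PresentedGroup.of 0 with ha
  set t : BG (2 * p + 2) (2 * p) := PresentedGroup.of 1 with ht
  have hright := toSwapProduct_right hθa hθt
  have h2 : (Multiplicative.ofAdd 1 : Multiplicative (ZMod 2)) * Multiplicative.ofAdd 1 = 1 := rfl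
  let x : θ.ker := ⟨a * a, by simp [MonoidHom.mem_ker, hθa, h2]⟩
  let y : θ.ker := ⟨t * a⁻¹, by simp [MonoidHom.mem_ker, hθa, hθt]⟩
  let z : θ.ker := ⟨a * t, by simp [MonoidHom.mem_ker, hθa, hθt, h2]⟩
  let F : θ.ker →* Multiplicative (ℤ × ℤ) := MonoidHom.mk'
    (fun k => (toSwapProduct p k).left) fun k l => by
      have : (toSwapProduct p k).right = 1 := (hright k).trans k.2
      simp [this]
  let ψ : Multiplicative (ℤ × ℤ) →* Abelianization θ.ker := MonoidHom.mk'
    (fun n => Abelianization.of y ^ n.toAdd.1 * Abelianization.of z ^ n.toAdd.2) fun m n => by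
      simp only [toAdd_mul, Prod.fst_add, Prod.snd_add, zpow_add]
      exact mul_mul_mul_comm _ _ _ _
  have hx : Abelianization.of x = 1 := by
    have h : (y * x) * (z⁻¹ * x ^ (p + 1) * z) * (y * x)⁻¹ = x ^ p := Subtype.ext hrel
    have h' := congrArg Abelianization.of h
    simp only [map_mul, map_inv, map_zpow, zpow_add, zpow_one] at h'
    rw [mul_inv_cancel_comm, mul_assoc, inv_mul_cancel_comm_assoc] at h'
    simpa using h'
  have hψy : ψ (Multiplicative.ofAdd (1, 0)) = Abelianization.of y := by simp [ψ]
  have hψz : ψ (Multiplicative.ofAdd (0, 1)) = Abelianization.of z := by simp [ψ]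
  have hFy : F y = Multiplicative.ofAdd (1, 0) := by
    change (toSwapProduct p (t * a⁻¹)).left = _
    rw [map_mul, map_inv, hFa, hFt]
    rfl
  have hFz : F z = Multiplicative.ofAdd (0, 1) := by
    change (toSwapProduct p (a * t)).left = _
    rw [map_mul, hFa, hFt]
    rfl
  have hFx : F x = 1 := by
    change (toSwapProduct p (a * a)).left = _
    rw [map_mul, hFa]
    rfl
  let K : Subgroup θ.ker := MonoidHom.eqLocus Abelianization.of (ψ.comp F)
  have hxK : x ∈ K := by
    change Abelianization.of x = ψ (F x)
    rw [hx, hFx, map_one]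
  have hyK : y ∈ K := by
    change Abelianization.of y = ψ (F y)
    rw [hFy, hψy]
  have hzK : z ∈ K := by
    change Abelianization.of z = ψ (F z)
    rw [hFz, hψz]
  have hK (k : θ.ker) : Abelianization.of k = ψ (F k) := by
    have hgen : Subgroup.closure {a, t} = ⊤ := by
      rw [← PresentedGroup.closure_range_of, ← Set.image_univ]
      congr 1
      ext g
      simp [Fin.exists_fin_two, ha, ht, eq_comm]
    rcases mem_or_mul_inv_mem_of_closure_eq_top hgen (H := K.map θ.ker.subtype)
      ⟨x, hxK, rfl⟩ ⟨y, hyK, rfl⟩ ⟨z, hzK, rfl⟩ k with ⟨l, hl, hlk⟩ | ⟨l, -, hlk⟩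
    · rwa [← Subtype.ext hlk]
    · have hka : θ (k * a⁻¹) = 1 := hlk ▸ l.2
      rw [map_mul, map_inv, hθa, MonoidHom.mem_ker.1 k.2] at hka
      exact absurd hka (by decide)
  refine ⟨MonoidHom.toMulEquiv (Abelianization.lift F) ψ ?_ ?_⟩
  · refine Abelianization.hom_ext _ _ (MonoidHom.ext fun k => ?_)
    simpa using (hK k).symm
  · refine MonoidHom.ext fun n => ?_
    change Abelianization.lift F (Abelianization.of y ^ n.toAdd.1 *
      Abelianization.of z ^ n.toAdd.2) = n
    rw [map_mul, map_zpow, map_zpow, Abelianization.lift_apply_of,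
      Abelianization.lift_apply_of, hFy, hFz, ← ofAdd_zsmul, ← ofAdd_zsmul, ← ofAdd_add]
    simp
end

section
/- Let p ≥ 1 be an integer and let Γ = BG(2p+1, 2p−1) = ⟨a, t ∣ t a t⁻¹ a^{2p+1} t a⁻¹ t⁻¹ = a^{2p−1}⟩. Let θ : Γ → ℤ/2 be the group homomorphism determined by θ(a) = 1 and θ(t) = 1 (well defined since the relator has exponent sum 2 in a and 0 in t), and let Γ' = ker θ. Then Γ' has index 2 in Γ and the abelianization of Γ' is isomorphic to ℤ × ℤ/4. -/
namespace BaumslagGersten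

/-- The abelian group `ℤ × ℤ/4`. -/
abbrev A : Type := ℤ × ZMod 4

lemma eq_zero_or_one : ∀ b : ZMod 2, b = 0 ∨ b = 1 := by decide

lemma one_add_one : (1 : ZMod 2) + 1 = 0 := rfl

/-- The translation by `u` in the first coordinate of `A × ZMod 2`. -/
def translation (u : A) : Equiv.Perm (A × ZMod 2) where
  toFun c := (c.1 + u, c.2)
  invFun c := (c.1 - u, c.2)
  left_inv c := by simp
  right_inv c := by simp

/-- The permutation of `A × ZMod 2` exchanging the two sheets, translating the sheet `0` by `u`
and the sheet `1` by `v`. -/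
def sheetSwap (u v : A) : Equiv.Perm (A × ZMod 2) where
  toFun c := (c.1 + if c.2 = 0 then u else v, c.2 + 1)
  invFun c := (c.1 - if c.2 = 1 then u else v, c.2 + 1)
  left_inv := by
    rintro ⟨c, b⟩
    rcases eq_zero_or_one b with rfl | rfl <;> simp [one_add_one]
  right_inv := by
    rintro ⟨c, b⟩
    rcases eq_zero_or_one b with rfl | rfl <;> simp [one_add_one]

lemma translation_zpow (u : A) (k : ℤ) : translation u ^ k = translation (k • u) := by
  have h0 : translation 0 = 1 := by ext c <;> simp [translation]
  have hadd (v w : A) : translation (v + w) = translation v * translation w := by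
    ext c <;> simp [translation] <;> ring
  induction k with
  | zero => simp [h0]
  | succ n ih => rw [zpow_add_one, ih, add_smul, one_smul, hadd]
  | pred n ih =>
    rw [zpow_sub_one, ih, mul_inv_eq_iff_eq_mul, ← hadd, sub_smul, one_smul, sub_add_cancel]

lemma sheetSwap_sq (v : A) : sheetSwap 0 v ^ (2 : ℤ) = translation v := by
  rw [zpow_two]
  ext ⟨c, b⟩ : 1
  rcases eq_zero_or_one b with rfl | rfl <;> simp [sheetSwap, translation, one_add_one]

lemma relator_sheetSwap (p : ℤ) :
    FreeGroup.lift ![sheetSwap 0 (0, 2), sheetSwap (1, 1) (1, 0)]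
      (BGRel (2 * p + 1) (2 * p - 1)) = 1 := by
  simp only [BGRel, map_mul, map_inv, map_zpow, FreeGroup.lift_apply_of, Matrix.cons_val_zero,
    Matrix.cons_val_one]
  rw [zpow_add, show -(2 * p - 1) = 1 + 2 * (-p) by ring, zpow_add, zpow_mul, zpow_mul,
    sheetSwap_sq, translation_zpow, translation_zpow, neg_smul, zpow_one]
  generalize p • ((0, 2) : A) = q
  ext ⟨c, b⟩ : 1
  obtain ⟨i, j⟩ := c
  obtain ⟨k, l⟩ := q
  rcases eq_zero_or_one b with rfl | rfl <;>
    simp [sheetSwap, translation, one_add_one, Equiv.Perm.inv_def, Equiv.symm] <;> ring_nf <;>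
    revert j <;> decide

/-- The action of `BG (2p+1) (2p-1)` on `A × ZMod 2`. -/
def sheetAction (p : ℤ) : BG (2 * p + 1) (2 * p - 1) →* Equiv.Perm (A × ZMod 2) :=
  PresentedGroup.toGroup (f := ![sheetSwap 0 (0, 2), sheetSwap (1, 1) (1, 0)])
    (by rintro r rfl; exact relator_sheetSwap p)

@[simp] lemma sheetAction_a (p : ℤ) :
    sheetAction p (PresentedGroup.of 0) = sheetSwap 0 (0, 2) := by
  simp [sheetAction]

@[simp] lemma sheetAction_t (p : ℤ) :
    sheetAction p (PresentedGroup.of 1) = sheetSwap (1, 1) (1, 0) := by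
  simp [sheetAction]

lemma relation_s15 (m n : ℤ) :
    (PresentedGroup.of 1 * PresentedGroup.of 0 * (PresentedGroup.of 1)⁻¹ *
      PresentedGroup.of 0 ^ m * PresentedGroup.of 1 * (PresentedGroup.of 0)⁻¹ *
      (PresentedGroup.of 1)⁻¹ * PresentedGroup.of 0 ^ (-n) : BG m n) = 1 := by
  have h := PresentedGroup.one_of_mem (rels := {BGRel m n}) (x := BGRel m n) rfl
  exact h

section Kernel

variable {p : ℤ} (θ : BG (2 * p + 1) (2 * p - 1) →* Multiplicative (ZMod 2))
  (hθa : θ (PresentedGroup.of 0) = Multiplicative.ofAdd 1)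
  (hθt : θ (PresentedGroup.of 1) = Multiplicative.ofAdd 1)

/-- The element `a²` of the kernel. -/
def genX : θ.ker := ⟨PresentedGroup.of 0 * PresentedGroup.of 0, by
  rw [MonoidHom.mem_ker, map_mul, hθa]; rfl⟩

/-- The element `a⁻¹ t` of the kernel. -/
def genY : θ.ker := ⟨(PresentedGroup.of 0)⁻¹ * PresentedGroup.of 1, by
  rw [MonoidHom.mem_ker, map_mul, map_inv, hθa, hθt]; rfl⟩

/-- The element `t a` of the kernel. -/
def genZ : θ.ker := ⟨PresentedGroup.of 1 * PresentedGroup.of 0, by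
  rw [MonoidHom.mem_ker, map_mul, hθa, hθt]; rfl⟩

lemma kernel_relation :
    genZ θ hθa hθt * (genY θ hθa hθt)⁻¹ * genX θ hθa ^ p * genZ θ hθa hθt *
      (genX θ hθa)⁻¹ * (genY θ hθa hθt)⁻¹ * genX θ hθa ^ (-p) = 1 := by
  apply Subtype.ext
  simp only [genX, genY, genZ, Subgroup.coe_mul, Subgroup.coe_inv, Subgroup.coe_zpow,
    Subgroup.coe_one, ← zpow_two]
  rw [← relation_s15 (2 * p + 1) (2 * p - 1)]
  group

lemma kernel_relation_conj :
    genY θ hθa hθt * genX θ hθa * (genZ θ hθa hθt)⁻¹ * genX θ hθa ^ (p + 1) *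
      genY θ hθa hθt * (genZ θ hθa hθt)⁻¹ * genX θ hθa ^ (1 - p) = 1 := by
  apply Subtype.ext
  simp only [genX, genY, genZ, Subgroup.coe_mul, Subgroup.coe_inv, Subgroup.coe_zpow,
    Subgroup.coe_one, ← zpow_two]
  have h := congrArg (fun g => (PresentedGroup.of 0)⁻¹ * g * PresentedGroup.of 0)
    (relation_s15 (2 * p + 1) (2 * p - 1))
  simp only [mul_one, inv_mul_cancel] at h
  rw [← h]
  group

/-- The class of an element of the kernel in its abelianization, written additively. -/
def cls (k : θ.ker) : Additive (Abelianization θ.ker) := Additive.ofMul (Abelianization.of k)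

lemma cls_mul (k l : θ.ker) : cls θ (k * l) = cls θ k + cls θ l := by
  simp [cls]

lemma cls_inv (k : θ.ker) : cls θ k⁻¹ = -cls θ k := by
  simp [cls]

lemma cls_one : cls θ 1 = 0 := by
  simp [cls]

lemma cls_zpow (k : θ.ker) (n : ℤ) : cls θ (k ^ n) = n • cls θ k := by
  simp [cls]

lemma two_smul_cls_sub_add_cls :
    (2 : ℤ) • (cls θ (genY θ hθa hθt) - cls θ (genZ θ hθa hθt)) + cls θ (genX θ hθa) = 0 := by
  have h := congrArg (cls θ) (kernel_relation θ hθa hθt)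
  simp only [cls_mul, cls_inv, cls_zpow, cls_one] at h
  linear_combination (norm := module) (-1 : ℤ) • h

lemma two_smul_cls_sub_add_three_smul_cls :
    (2 : ℤ) • (cls θ (genY θ hθa hθt) - cls θ (genZ θ hθa hθt)) +
      (3 : ℤ) • cls θ (genX θ hθa) = 0 := by
  have h := congrArg (cls θ) (kernel_relation_conj θ hθa hθt)
  simp only [cls_mul, cls_inv, cls_zpow, cls_one] at h
  linear_combination (norm := module) h

lemma four_smul_cls_sub :
    (4 : ℤ) • (cls θ (genY θ hθa hθt) - cls θ (genZ θ hθa hθt)) = 0 := by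
  linear_combination (norm := module) (3 : ℤ) • two_smul_cls_sub_add_cls θ hθa hθt -
    two_smul_cls_sub_add_three_smul_cls θ hθa hθt

/-- The homomorphism from `ℤ × ℤ/4` to the abelianized kernel sending `(1, 0)` to the class of
`t a` and `(0, 1)` to the difference of the classes of `a⁻¹ t` and `t a`. -/
def toAbelianizedKernel : A →+ Additive (Abelianization θ.ker) :=
  AddMonoidHom.coprod (zmultiplesHom _ (cls θ (genZ θ hθa hθt)))
    (ZMod.lift 4 ⟨zmultiplesHom _ (cls θ (genY θ hθa hθt) - cls θ (genZ θ hθa hθt)), by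
      simpa using four_smul_cls_sub θ hθa hθt⟩)

lemma toAbelianizedKernel_apply (i j : ℤ) :
    toAbelianizedKernel θ hθa hθt (i, (j : ZMod 4)) =
      i • cls θ (genZ θ hθa hθt) +
        j • (cls θ (genY θ hθa hθt) - cls θ (genZ θ hθa hθt)) := by
  simp [toAbelianizedKernel, -Int.cast_ofNat]

lemma toAbelianizedKernel_x :
    toAbelianizedKernel θ hθa hθt (0, 2) = cls θ (genX θ hθa) := by
  have h := toAbelianizedKernel_apply θ hθa hθt 0 2
  push_cast at h
  rw [h]
  linear_combination (norm := module) four_smul_cls_sub θ hθa hθt -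
    two_smul_cls_sub_add_cls θ hθa hθt

lemma toAbelianizedKernel_y :
    toAbelianizedKernel θ hθa hθt (1, 1) = cls θ (genY θ hθa hθt) := by
  have h := toAbelianizedKernel_apply θ hθa hθt 1 1
  push_cast at h
  rw [h]
  module

lemma toAbelianizedKernel_z :
    toAbelianizedKernel θ hθa hθt (1, 0) = cls θ (genZ θ hθa hθt) := by
  have h := toAbelianizedKernel_apply θ hθa hθt 1 0
  push_cast at h
  rw [h]
  module

/-- The transversal `{1, a}` of the kernel. -/
def transversal (m n : ℤ) (b : ZMod 2) : BG m n := if b = 0 then 1 else PresentedGroup.of 0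

lemma map_transversal (ha : θ (PresentedGroup.of 0) = Multiplicative.ofAdd 1) (b : ZMod 2) :
    θ (transversal _ _ b) = Multiplicative.ofAdd b := by
  rcases eq_zero_or_one b with rfl | rfl <;> simp [transversal, ha]

lemma schreier_mem (ha : θ (PresentedGroup.of 0) = Multiplicative.ofAdd 1)
    (g : BG (2 * p + 1) (2 * p - 1)) (b : ZMod 2) :
    (transversal _ _ (b + (θ g).toAdd))⁻¹ * g * transversal _ _ b ∈ θ.ker := by
  rw [MonoidHom.mem_ker, map_mul, map_mul, map_inv, map_transversal θ ha,
    map_transversal θ ha]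
  apply Multiplicative.toAdd.injective
  simp

/-- The Schreier element of the kernel attached to `g` and the coset `b`. -/
def schreier (g : BG (2 * p + 1) (2 * p - 1)) (b : ZMod 2) : θ.ker :=
  ⟨_, schreier_mem θ hθa g b⟩

lemma schreier_mul (g h : BG (2 * p + 1) (2 * p - 1)) (b : ZMod 2) :
    schreier θ hθa (g * h) b =
      schreier θ hθa g (b + (θ h).toAdd) * schreier θ hθa h b := by
  apply Subtype.ext
  simp only [schreier, Subgroup.coe_mul, map_mul, toAdd_mul]
  rw [show b + ((θ g).toAdd + (θ h).toAdd) = b + (θ h).toAdd + (θ g).toAdd by ring]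
  group

lemma schreier_one (b : ZMod 2) : schreier θ hθa 1 b = 1 := by
  apply Subtype.ext
  simp [schreier]

lemma schreier_of_mem (k : θ.ker) : schreier θ hθa k 0 = k := by
  have hk : θ k = 1 := k.2
  apply Subtype.ext
  simp [schreier, transversal, hk]

/-- The action on `A × ZMod 2` translates each sheet by a lift of the class of the corresponding
Schreier element. -/
lemma exists_lift_schreier (g : BG (2 * p + 1) (2 * p - 1)) (b : ZMod 2) :
    ∃ d : A, (∀ c, sheetAction p g (c, b) = (c + d, b + (θ g).toAdd)) ∧
      toAbelianizedKernel θ hθa hθt d = cls θ (schreier θ hθa g b) := by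
  have hg : g ∈ Subgroup.closure (Set.range PresentedGroup.of) := by
    rw [PresentedGroup.closure_range_of]; trivial
  induction hg using Subgroup.closure_induction generalizing b with
  | mem g hg =>
    obtain ⟨i, rfl⟩ := hg
    fin_cases i
    · rcases eq_zero_or_one b with rfl | rfl
      · refine ⟨0, fun c => by simp [sheetSwap, hθa], ?_⟩
        rw [map_zero, ← cls_one]
        congr 1
        apply Subtype.ext
        simp [schreier, transversal, hθa]
      · refine ⟨(0, 2), fun c => by simp [sheetSwap, hθa], ?_⟩
        rw [toAbelianizedKernel_x]
        congr 1
        apply Subtype.ext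
        simp [schreier, transversal, hθa, genX, one_add_one]
    · rcases eq_zero_or_one b with rfl | rfl
      · refine ⟨(1, 1), fun c => by simp [sheetSwap, hθt], ?_⟩
        rw [toAbelianizedKernel_y]
        congr 1
        apply Subtype.ext
        simp [schreier, transversal, hθt, genY]
      · refine ⟨(1, 0), fun c => by simp [sheetSwap, hθt], ?_⟩
        rw [toAbelianizedKernel_z]
        congr 1
        apply Subtype.ext
        simp [schreier, transversal, hθt, genZ, one_add_one]
  | one => exact ⟨0, by simp, by rw [map_zero, schreier_one, cls_one]⟩
  | mul g h _ _ ihg ihh =>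
    obtain ⟨d, hd, hd'⟩ := ihh b
    obtain ⟨e, he, he'⟩ := ihg (b + (θ h).toAdd)
    refine ⟨d + e, fun c => ?_, ?_⟩
    · rw [map_mul, Equiv.Perm.mul_apply, hd, he, map_mul, toAdd_mul, add_assoc, add_assoc,
        add_comm (θ h).toAdd]
    · rw [map_add, hd', he', schreier_mul, cls_mul]
      exact add_comm _ _
  | inv g _ ih =>
    obtain ⟨d, hd, hd'⟩ := ih (b + (θ g⁻¹).toAdd)
    refine ⟨-d, fun c => ?_, ?_⟩
    · rw [map_inv, Equiv.Perm.inv_eq_iff_eq, hd, add_assoc b, ← toAdd_mul, ← map_mul,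
        inv_mul_cancel, neg_add_cancel_right, map_one, toAdd_one, add_zero]
    · have h := schreier_mul θ hθa g g⁻¹ b
      rw [mul_inv_cancel, schreier_one] at h
      rw [map_neg, hd', ← cls_inv, eq_inv_of_mul_eq_one_left h.symm, inv_inv]

/-- The homomorphism from the kernel to `A` recording the translation of the sheet `0`. -/
def kernelToA : θ.ker →* Multiplicative A where
  toFun k := Multiplicative.ofAdd (sheetAction p k (0, 0)).1
  map_one' := by simp
  map_mul' k l := by
    obtain ⟨d, hd, -⟩ := exists_lift_schreier θ hθa hθt k 0
    obtain ⟨e, he, -⟩ := exists_lift_schreier θ hθa hθt l 0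
    have hl : θ l = 1 := l.2
    simp [hd, he, hl, mul_comm]

/-- The homomorphism from the abelianized kernel to `A` induced by `kernelToA`. -/
def abelianizedKernelToA : Additive (Abelianization θ.ker) →+ A :=
  MonoidHom.toAdditiveLeft (Abelianization.lift (kernelToA θ hθa hθt))

lemma abelianizedKernelToA_cls (k : θ.ker) :
    abelianizedKernelToA θ hθa hθt (cls θ k) = (sheetAction p k (0, 0)).1 := by
  simp [abelianizedKernelToA, cls, kernelToA]

lemma abelianizedKernelToA_toAbelianizedKernel (d : A) :
    abelianizedKernelToA θ hθa hθt (toAbelianizedKernel θ hθa hθt d) = d := by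
  obtain ⟨i, j⟩ := d
  obtain ⟨j, rfl⟩ := ZMod.intCast_surjective j
  rw [toAbelianizedKernel_apply, map_add, map_zsmul, map_zsmul, map_sub,
    abelianizedKernelToA_cls, abelianizedKernelToA_cls]
  have hz : (sheetAction p (genZ θ hθa hθt) (0, 0)).1 = (1, 0) := by
    simp [genZ, sheetSwap]
  have hy : (sheetAction p (genY θ hθa hθt) (0, 0)).1 = (1, 1) := by
    simp [genY, sheetSwap, Equiv.Perm.inv_def, Equiv.symm]
  rw [hz, hy]
  simp

lemma toAbelianizedKernel_surjective :
    Function.Surjective (toAbelianizedKernel θ hθa hθt) := by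
  intro x
  obtain ⟨k, rfl⟩ : ∃ k, cls θ k = x := QuotientGroup.mk_surjective x.toMul
  obtain ⟨d, -, hd⟩ := exists_lift_schreier θ hθa hθt k 0
  exact ⟨d, by rw [hd, schreier_of_mem]⟩

end Kernel

end BaumslagGersten

theorem stmt_15 (p : ℤ) (hp : 1 ≤ p)
    (θ : BG (2 * p + 1) (2 * p - 1) →* Multiplicative (ZMod 2))
    (hθa : θ (PresentedGroup.of 0) = Multiplicative.ofAdd 1)
    (hθt : θ (PresentedGroup.of 1) = Multiplicative.ofAdd 1) :
    (MonoidHom.ker θ).index = 2 ∧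
      Nonempty (Abelianization ↥(MonoidHom.ker θ) ≃* Multiplicative (ℤ × ZMod 4)) := by
  constructor
  · have hsurj : Function.Surjective θ := fun b =>
      ⟨_, BaumslagGersten.map_transversal θ hθa b.toAdd⟩
    rw [Subgroup.index_ker, MonoidHom.range_eq_top.mpr hsurj]
    simp
  · have hinj := Function.LeftInverse.injective
      (BaumslagGersten.abelianizedKernelToA_toAbelianizedKernel θ hθa hθt)
    exact ⟨(AddEquiv.toMultiplicative (AddEquiv.ofBijective _
      ⟨hinj, BaumslagGersten.toAbelianizedKernel_surjective θ hθa hθt⟩)).symm⟩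
end

section
/- For every integer n ≥ 0, the Baumslag–Gersten group BG(n+2, n) = ⟨a, t ∣ t a t⁻¹ a^{n+2} t a⁻¹ t⁻¹ = a^n⟩ has a subgroup Γ' of index 2 whose abelianization A has no ℤ/2 direct summand, i.e. every x ∈ A with 2x = 0 satisfies x = 2y for some y ∈ A. -/
open Subgroup in
/-- Reidemeister–Schreier generators of the kernel of a map onto `ℤ/2` sending `a` to the
generator and `t` to the identity. -/
theorem ker_le_closure_of_closure_pair_eq_top {G : Type*} [Group G] {a t : G}
    (hgen : closure {a, t} = ⊤) (φ : G →* Multiplicative (ZMod 2))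
    (ha : φ a = Multiplicative.ofAdd 1) (ht : φ t = 1) :
    φ.ker ≤ closure {t, a * t * a⁻¹, a ^ 2} := by
  set C := closure {t, a * t * a⁻¹, a ^ 2} with hC
  have mt : t ∈ C := subset_closure (by simp)
  have mu : a * t * a⁻¹ ∈ C := subset_closure (by simp)
  have mb : a ^ 2 ∈ C := subset_closure (by simp)
  have hCker : C ≤ φ.ker := by
    rw [hC, closure_le]
    rintro x (rfl | rfl | rfl)
    · exact ht
    · simp [MonoidHom.mem_ker, ht]
    · simp only [SetLike.mem_coe, MonoidHom.mem_ker, map_pow, ha]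
      decide
  have key : ∀ g : G, ∃ h ∈ C, g = h ∨ g = h * a := by
    intro g
    have hg : g ∈ closure {a, t} := hgen ▸ mem_top g
    induction hg using closure_induction_right with
    | one => exact ⟨1, one_mem _, Or.inl rfl⟩
    | mul_right x hx y hy ih =>
      obtain ⟨h, hh, rfl | rfl⟩ := ih <;> rcases hy with rfl | rfl
      · exact ⟨x, hh, Or.inr rfl⟩
      · exact ⟨_, mul_mem hh mt, Or.inl rfl⟩
      · exact ⟨_, mul_mem hh mb, Or.inl (by rw [sq, mul_assoc])⟩
      · exact ⟨_, mul_mem hh mu, Or.inr (by group)⟩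
    | mul_inv_cancel x hx y hy ih =>
      obtain ⟨h, hh, rfl | rfl⟩ := ih <;> rcases hy with rfl | rfl
      · exact ⟨_, mul_mem hh (inv_mem mb), Or.inr (by group)⟩
      · exact ⟨_, mul_mem hh (inv_mem mt), Or.inl rfl⟩
      · exact ⟨h, hh, Or.inl (by group)⟩
      · exact ⟨_, mul_mem hh (inv_mem mu), Or.inr (by group)⟩
  intro g hg
  obtain ⟨h, hh, rfl | rfl⟩ := key g
  · exact hh
  · have h1 : φ h = 1 := hCker hh
    rw [MonoidHom.mem_ker, map_mul, h1, ha, one_mul] at hg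
    exact absurd hg (by decide)

open Subgroup in
/-- If three elements generate a subgroup, their classes generate its abelianization. -/
theorem Abelianization.exists_eq_zpow_mul_of_le_closure {G : Type*} [Group G] {K : Subgroup G}
    (u v w : K) (hK : K ≤ closure {(u : G), (v : G), (w : G)}) (x : Abelianization K) :
    ∃ p q r : ℤ, x = of u ^ p * of v ^ q * of w ^ r := by
  obtain ⟨⟨g, hg⟩, rfl⟩ := QuotientGroup.mk_surjective x
  suffices h : ∀ g ∈ closure {(u : G), (v : G), (w : G)}, ∃ k : K, (k : G) = g ∧
      ∃ p q r : ℤ, of k = of u ^ p * of v ^ q * of w ^ r by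
    obtain ⟨k, hk, h⟩ := h g (hK hg)
    obtain rfl : k = ⟨g, hg⟩ := Subtype.ext hk
    exact h
  intro g hg
  induction hg using closure_induction with
  | mem x hx =>
    rcases hx with rfl | rfl | rfl
    · exact ⟨u, rfl, 1, 0, 0, by simp⟩
    · exact ⟨v, rfl, 0, 1, 0, by simp⟩
    · exact ⟨w, rfl, 0, 0, 1, by simp⟩
  | one => exact ⟨1, rfl, 0, 0, 0, by simp⟩
  | mul x y _ _ hx hy =>
    obtain ⟨k, rfl, p, q, r, hk⟩ := hx
    obtain ⟨l, rfl, p', q', r', hl⟩ := hy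
    refine ⟨k * l, rfl, p + p', q + q', r + r', ?_⟩
    rw [map_mul, hk, hl, zpow_add, zpow_add, zpow_add]
    ac_rfl
  | inv x _ hx =>
    obtain ⟨k, rfl, p, q, r, hk⟩ := hx
    refine ⟨k⁻¹, rfl, -p, -q, -r, ?_⟩
    rw [map_inv, hk, zpow_neg, zpow_neg, zpow_neg, mul_inv, mul_inv]

open Subgroup in
/-- A criterion for elements of order two in the abelianization of an index two subgroup of a
two-generator group to be squares, in terms of a quotient of dihedral type. -/
theorem Abelianization.ker_exists_eq_sq_of_sq_eq_one {G H : Type*} [Group G] [Group H] {a t : G}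
    (hgen : closure {a, t} = ⊤) (φ : G →* Multiplicative (ZMod 2))
    (ha : φ a = Multiplicative.ofAdd 1) (ht : φ t = 1)
    (e : G →* Multiplicative ℤ) (ea : e a = 1) (et : e t = Multiplicative.ofAdd 1)
    (f : G →* H) (hconj : f a * f t * (f a)⁻¹ = (f t)⁻¹) (hsq : f a ^ 2 ∈ zpowers (f t))
    (hord : 8 ∣ orderOf (f t)) (u v w : φ.ker) (hu : (u : G) = t) (hv : (v : G) = a * t * a⁻¹)
    (hw : (w : G) = a ^ 2) (hrel : ∃ k : ℤ, of w = (of v / of u) ^ k)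
    (x : Abelianization φ.ker) (hx : x ^ 2 = 1) : ∃ y : Abelianization φ.ker, x = y ^ 2 := by
  have hK : φ.ker ≤ closure {(u : G), (v : G), (w : G)} := by
    rw [hu, hv, hw]
    exact ker_le_closure_of_closure_pair_eq_top hgen φ ha ht
  have hfK : ∀ g : φ.ker, (f.comp φ.ker.subtype) g ∈ zpowers (f t) := by
    have : closure {(u : G), (v : G), (w : G)} ≤ (zpowers (f t)).comap f := by
      rw [closure_le, hu, hv, hw]
      rintro x (rfl | rfl | rfl)
      · exact mem_zpowers _
      · simp [hconj]
      · simpa using hsq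
    exact fun g => this (hK g.2)
  let _ : CommGroup (zpowers (f t)) :=
    { (zpowers (f t)).toGroup with mul_comm := mul_comm' }
  let f' : Abelianization φ.ker →* zpowers (f t) :=
    lift ((f.comp φ.ker.subtype).codRestrict (zpowers (f t)) hfK)
  let e' : Abelianization φ.ker →* Multiplicative ℤ := lift (e.comp φ.ker.subtype)
  have e'u : e' (of u) = Multiplicative.ofAdd 1 := by simp [e', hu, et]
  have e'v : e' (of v) = Multiplicative.ofAdd 1 := by simp [e', hv, et, ea]
  have f'u : (f' (of u) : H) = f t := by simp [f', hu]
  have f'v : (f' (of v) : H) = (f t)⁻¹ := by simp [f', hv, hconj]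
  obtain ⟨k, hk⟩ := hrel
  obtain ⟨p, q, hpq⟩ : ∃ p q : ℤ, x = of u ^ p * (of v / of u) ^ q := by
    obtain ⟨p, q, r, rfl⟩ := exists_eq_zpow_mul_of_le_closure u v w hK x
    refine ⟨p + q, q + k * r, ?_⟩
    rw [hk, ← zpow_mul, zpow_add, zpow_add, div_zpow _ _ q, ← mul_assoc (_ * _),
      mul_assoc (of u ^ p) (of u ^ q), mul_div_cancel]
  have hp : p = 0 := by
    have h := congrArg e' hx
    rw [hpq] at h
    simp only [map_pow, map_mul, map_zpow, map_div, e'u, e'v, map_one, div_self', one_zpow,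
      mul_one] at h
    have h2 := congrArg Multiplicative.toAdd h
    simpa using h2
  subst hp
  have hq : (8 : ℤ) ∣ -4 * q := by
    have h := congrArg (fun y => (f' y : H)) hx
    simp only [hpq, map_pow, map_zpow, map_div, map_one, zpow_zero, one_mul,
      coe_pow, coe_zpow, coe_div, f'u, f'v, coe_one] at h
    have h2 : f t ^ (-4 * q) = 1 := by
      rw [← h, div_eq_mul_inv]
      group
    exact (Int.natCast_dvd_natCast.mpr hord).trans (orderOf_dvd_iff_zpow_eq_one.mpr h2)
  obtain ⟨j, rfl⟩ : ∃ j, q = j * 2 := ⟨q / 2, by omega⟩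
  exact ⟨(of v / of u) ^ j, by rw [hpq, zpow_zero, one_mul, zpow_mul, zpow_ofNat]⟩

theorem eq_one_of_conj_zpow_mul_eq_one {A : Type*} [CommGroup A] {u v w : A} {k : ℤ}
    (h : u * v⁻¹ * w ^ (k + 1) * v * u⁻¹ * w ^ (-k) = 1) : w = 1 := by
  apply Additive.ofMul.injective
  replace h := congrArg Additive.ofMul h
  simp only [ofMul_mul, ofMul_inv, ofMul_zpow, ofMul_one] at h ⊢
  rw [← h]
  module

theorem eq_div_zpow_two_of_mul_eq_one {A : Type*} [CommGroup A] {u v w : A} {k : ℤ}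
    (h : u * v⁻¹ * w ^ (k + 2) * u * w⁻¹ * v⁻¹ * w ^ (-k) = 1) : w = (v / u) ^ (2 : ℤ) := by
  apply Additive.ofMul.injective
  replace h := congrArg Additive.ofMul h
  simp only [ofMul_mul, ofMul_inv, ofMul_zpow, ofMul_one, ofMul_div] at h ⊢
  rw [← sub_eq_zero, ← h]
  module

namespace BG

/-- The homomorphism out of `BG(m,n)` determined by images of `a` and `t`. -/
def lift {H : Type*} [Group H] {m n : ℤ} (x y : H)
    (h : y * x * y⁻¹ * x ^ m * y * x⁻¹ * y⁻¹ * x ^ (-n) = 1) : BG m n →* H :=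
  PresentedGroup.toGroup (f := ![x, y]) (by
    rintro r rfl
    simpa [BGRel] using h)

/-- The generator `a` of `BG(m,n)`. -/
def a (m n : ℤ) : BG m n := PresentedGroup.of 0

/-- The generator `t` of `BG(m,n)`. -/
def t (m n : ℤ) : BG m n := PresentedGroup.of 1

section

variable {H : Type*} [Group H] {m n : ℤ} (x y : H)
  (h : y * x * y⁻¹ * x ^ m * y * x⁻¹ * y⁻¹ * x ^ (-n) = 1)

@[simp]
theorem lift_a : lift x y h (a m n) = x := by simp [lift, a]

@[simp]
theorem lift_t : lift x y h (t m n) = y := by simp [lift, t]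

end

theorem relation (m n : ℤ) :
    t m n * a m n * (t m n)⁻¹ * a m n ^ m * t m n * (a m n)⁻¹ * (t m n)⁻¹ * a m n ^ (-n) = 1 :=
  PresentedGroup.one_of_mem (rels := {BGRel m n}) (Set.mem_singleton _)

theorem closure_a_t (m n : ℤ) : Subgroup.closure {a m n, t m n} = ⊤ := by
  rw [← PresentedGroup.closure_range_of {BGRel m n}]
  congr 1
  ext g
  simp [a, t, Fin.exists_fin_two, eq_comm]

/-- The parity of the exponent sum of `a`. -/
def parity (n : ℤ) : BG (n + 2) n →* Multiplicative (ZMod 2) :=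
  lift (Multiplicative.ofAdd 1) 1 (by
    simp only [inv_one, mul_one, one_mul]
    apply Multiplicative.toAdd.injective
    simp only [toAdd_mul, toAdd_inv, toAdd_zpow, toAdd_ofAdd, toAdd_one, zsmul_eq_mul]
    push_cast
    linear_combination (by decide : (2 : ZMod 2) = 0))

/-- The exponent sum of `t`. -/
def exponentSum (n : ℤ) : BG (n + 2) n →* Multiplicative ℤ :=
  lift 1 (Multiplicative.ofAdd 1) (by simp)

theorem index_ker_parity (n : ℤ) : (parity n).ker.index = 2 := by
  have hs : (parity n).range = ⊤ := by
    rw [eq_top_iff]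
    intro z _
    obtain rfl | rfl : z = 1 ∨ z = Multiplicative.ofAdd 1 := by
      revert z
      simp only [Subgroup.mem_top, forall_const]
      decide
    · exact one_mem _
    · exact ⟨a _ _, by simp [parity]⟩
  rw [Subgroup.index_ker, hs]
  simp

/-- The quotient of `BG(n+2,n)` onto the infinite dihedral group, for even `n`. -/
def toDihedral (n : ℤ) (hn : Even n) : BG (n + 2) n →* DihedralGroup 0 :=
  lift (DihedralGroup.sr 0) (DihedralGroup.r 1) (by
    obtain ⟨k, rfl⟩ := hn
    have h : (DihedralGroup.sr 0 : DihedralGroup 0) ^ (2 : ℤ) = 1 := by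
      rw [zpow_two, DihedralGroup.sr_mul_self]
    rw [show k + k + 2 = 2 * (k + 1) by ring, show -(k + k) = 2 * -k by ring, zpow_mul, zpow_mul,
      h]
    simp)

/-- The quotient of `BG(n+2,n)` onto the quaternion group of order 16, for odd `n`. -/
def toQuaternion (n : ℤ) (hn : Odd n) : BG (n + 2) n →* QuaternionGroup 4 :=
  lift (QuaternionGroup.xa 0) (QuaternionGroup.a 1) (by
    obtain ⟨k, rfl⟩ := hn
    have h : (QuaternionGroup.xa 0 : QuaternionGroup 4) ^ (2 : ℤ) = QuaternionGroup.a 4 := by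
      decide
    have h4 : (QuaternionGroup.a 4 : QuaternionGroup 4) ^ (2 : ℤ) = 1 := by decide
    have hk : (QuaternionGroup.a 4 : QuaternionGroup 4) ^ k = 1 ∨
        (QuaternionGroup.a 4 : QuaternionGroup 4) ^ k = QuaternionGroup.a 4 := by
      obtain ⟨j, rfl | rfl⟩ := k.even_or_odd'
      · left; rw [zpow_mul, h4, one_zpow]
      · right; rw [zpow_add, zpow_mul, h4, one_zpow, one_mul, zpow_one]
    rw [show 2 * k + 1 + 2 = 2 * k + 3 by ring, zpow_neg, zpow_add, zpow_add, zpow_mul, h]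
    rcases hk with hk | hk <;> rw [hk] <;> decide)

end BG

theorem stmt_16 (n : ℤ) (hn : 0 ≤ n) :
    ∃ Γ' : Subgroup (BG (n + 2) n), Γ'.index = 2 ∧
      ∀ x : Abelianization ↥Γ', x ^ 2 = 1 → ∃ y : Abelianization ↥Γ', x = y ^ 2 := by
  refine ⟨(BG.parity n).ker, BG.index_ker_parity n, ?_⟩
  have ha : BG.parity n (BG.a _ _) = Multiplicative.ofAdd 1 := BG.lift_a _ _ _
  have ht : BG.parity n (BG.t _ _) = 1 := BG.lift_t _ _ _
  have ea : BG.exponentSum n (BG.a _ _) = 1 := BG.lift_a _ _ _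
  have et : BG.exponentSum n (BG.t _ _) = Multiplicative.ofAdd 1 := BG.lift_t _ _ _
  have hrel := BG.relation (n + 2) n
  have hgen := BG.closure_a_t (n + 2) n
  set a := BG.a (n + 2) n
  set t := BG.t (n + 2) n
  let u : (BG.parity n).ker := ⟨t, ht⟩
  let v : (BG.parity n).ker := ⟨a * t * a⁻¹, by simp [MonoidHom.mem_ker, ht]⟩
  let w : (BG.parity n).ker := ⟨a ^ 2, by
    rw [MonoidHom.mem_ker, map_pow, ha]
    decide⟩
  rcases n.even_or_odd with hn' | hn'
  · have fa : BG.toDihedral n hn' a = DihedralGroup.sr 0 := BG.lift_a _ _ _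
    have ft : BG.toDihedral n hn' t = DihedralGroup.r 1 := BG.lift_t _ _ _
    refine Abelianization.ker_exists_eq_sq_of_sq_eq_one hgen _ ha ht _ ea et
      (BG.toDihedral n hn') ?_ ?_ ?_ u v w rfl rfl rfl ⟨0, ?_⟩
    · rw [fa, ft]
      simp
    · rw [fa, sq, DihedralGroup.sr_mul_self]
      exact one_mem _
    · rw [ft, DihedralGroup.orderOf_r_one]
      exact dvd_zero 8
    · obtain ⟨k, hk⟩ := hn'
      have h : u * v⁻¹ * w ^ (k + 1) * v * u⁻¹ * w ^ (-k) = 1 := by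
        apply Subtype.ext
        have hm : a ^ (n + 2) = a ^ (2 * (k + 1)) := congrArg (a ^ ·) (by omega)
        have hn : a ^ (-n) = a ^ (2 * -k) := congrArg (a ^ ·) (by omega)
        rw [Subgroup.coe_one, ← hrel, hm, hn]
        simp only [u, v, w, Subgroup.coe_mul, Subgroup.coe_inv, Subgroup.coe_zpow]
        group
      have h' := congrArg Abelianization.of h
      simp only [map_mul, map_inv, map_zpow, map_one] at h'
      rw [zpow_zero]
      exact eq_one_of_conj_zpow_mul_eq_one h'
  · have fa : BG.toQuaternion n hn' a = QuaternionGroup.xa 0 := BG.lift_a _ _ _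
    have ft : BG.toQuaternion n hn' t = QuaternionGroup.a 1 := BG.lift_t _ _ _
    refine Abelianization.ker_exists_eq_sq_of_sq_eq_one hgen _ ha ht _ ea et
      (BG.toQuaternion n hn') ?_ ?_ ?_ u v w rfl rfl rfl ⟨2, ?_⟩
    · rw [fa, ft]
      decide
    · rw [fa, ft]
      exact ⟨4, by decide⟩
    · rw [ft, QuaternionGroup.orderOf_a_one]
    · obtain ⟨k, hk⟩ := hn'
      have h : u * v⁻¹ * w ^ (k + 2) * u * w⁻¹ * v⁻¹ * w ^ (-k) = 1 := by
        apply Subtype.ext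
        have hm : a ^ (n + 2) = a ^ (2 * (k + 1) + 1) := congrArg (a ^ ·) (by omega)
        have hn : a ^ (-n) = a ^ (2 * -k - 1) := congrArg (a ^ ·) (by omega)
        rw [Subgroup.coe_one, ← hrel, hm, hn]
        simp only [u, v, w, Subgroup.coe_mul, Subgroup.coe_inv, Subgroup.coe_zpow]
        group
      have h' := congrArg Abelianization.of h
      simp only [map_mul, map_inv, map_zpow, map_one] at h'
      exact eq_div_zpow_two_of_mul_eq_one h'
end

section
/- Let n ≥ 2 and let k_1, …, k_n be integers with k_i ≥ 1 for all i and gcd(k_1, …, k_n) = 2. Let Γ = ⟨s_1, …, s_n ∣ s_1^{k_1} s_2^{k_2} ⋯ s_n^{k_n}⟩ be the Meskin group, let θ : Γ → ℤ/2 be the group homomorphism determined by θ(s_i) = 1 for every i (well defined since every k_i is even, so the relator has even total exponent sum), and let Γ' = ker θ. Then Γ' has index 2 in Γ and the abelianization of Γ' is isomorphic to ℤ^{2n−2}, the free abelian group of rank 2n−2. -/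
/-- The relator `s_1^{k_1} s_2^{k_2} ⋯ s_n^{k_n}` of the Meskin group, in the free
group on `n` generators, where `s_i` is `FreeGroup.of i`. -/
def MeskinRel (n : ℕ) (k : Fin n → ℤ) : FreeGroup (Fin n) :=
  ((List.finRange n).map fun i => FreeGroup.of i ^ k i).prod

/-- The Meskin group `⟨s_1, …, s_n ∣ s_1^{k_1} s_2^{k_2} ⋯ s_n^{k_n}⟩`. -/
abbrev Meskin (n : ℕ) (k : Fin n → ℤ) : Type :=
  PresentedGroup ({MeskinRel n k} : Set (FreeGroup (Fin n)))

namespace Meskin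

local notation "C₂" => Multiplicative (ZMod 2)

/-- The generator of the cyclic group of order two. -/
abbrev flip : C₂ := Multiplicative.ofAdd 1

lemma eq_one_or_eq_flip (q : C₂) : q = 1 ∨ q = flip := by
  revert q; decide

lemma flip_ne_one : flip ≠ 1 := by decide

lemma flip_mul_flip : flip * flip = 1 := by decide

lemma inv_eq_self (q : C₂) : q⁻¹ = q := by
  revert q; decide

lemma of_prod_eq_one {n : ℕ} (k : Fin n → ℤ) :
    ((List.finRange n).map fun i => (PresentedGroup.of i : Meskin n k) ^ k i).prod = 1 := by
  have h : PresentedGroup.mk {MeskinRel n k} (MeskinRel n k) = 1 :=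
    PresentedGroup.one_of_mem (Set.mem_singleton _)
  unfold MeskinRel at h
  rw [map_list_prod, List.map_map] at h
  exact h

section Wreath

variable {M : Type} [CommGroup M]

/-- The diagonal embedding of a group in its wreath product with the group of order two. -/
def diagonal : M →* M ≀ᵣ C₂ where
  toFun d := ⟨fun _ => d, 1⟩
  map_one' := rfl
  map_mul' _ _ := by ext <;> simp

/-- The element of the wreath product with components `x`, `y` lying over the flip. -/
def wreathGen (x y : M) : M ≀ᵣ C₂ :=
  ⟨fun q => if q = 1 then x else y, flip⟩

lemma wreathGen_mul_self (x y : M) : wreathGen x y * wreathGen x y = diagonal (x * y) := by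
  ext q
  · rcases eq_one_or_eq_flip q with rfl | rfl <;>
      simp [wreathGen, diagonal, mul_comm]
  · exact flip_mul_flip

variable {n : ℕ} {k m : Fin n → ℤ} {x y : Fin n → M}

/-- The homomorphism from the Meskin group to a wreath product with the group of order two that
records the images of `s_i t⁻¹` and `t s_i`, where `t` is a fixed generator. -/
def toWreath (hkm : ∀ i, k i = 2 * m i) (hr : ∏ i, (x i * y i) ^ m i = 1) :
    Meskin n k →* M ≀ᵣ C₂ :=
  PresentedGroup.toGroup (f := fun i => wreathGen (x i) (y i)) <| by
    rintro r rfl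
    have h : ∀ i, wreathGen (x i) (y i) ^ k i = diagonal ((x i * y i) ^ m i) := fun i => by
      rw [hkm, zpow_mul, zpow_two, wreathGen_mul_self, map_zpow]
    rw [MeskinRel, map_list_prod, List.map_map]
    rw [← map_one diagonal, ← hr, Fin.prod_univ_def, map_list_prod, List.map_map]
    congr 2
    funext i
    rw [Function.comp_apply, map_zpow, FreeGroup.lift_apply_of, h, Function.comp_apply]

lemma toWreath_of (hkm : ∀ i, k i = 2 * m i) (hr : ∏ i, (x i * y i) ^ m i = 1) (i : Fin n) :
    toWreath hkm hr (PresentedGroup.of i) = wreathGen (x i) (y i) :=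
  PresentedGroup.toGroup.of _

variable {θ : Meskin n k →* C₂}

lemma toWreath_right (hkm : ∀ i, k i = 2 * m i) (hr : ∏ i, (x i * y i) ^ m i = 1)
    (hθ : ∀ i, θ (PresentedGroup.of i) = flip) (g : Meskin n k) :
    (toWreath hkm hr g).right = θ g := by
  have h : RegularWreathProduct.rightHom.comp (toWreath hkm hr) = θ :=
    PresentedGroup.ext fun i => by
      rw [MonoidHom.comp_apply, toWreath_of, hθ]
      rfl
  exact DFunLike.congr_fun h g

/-- The homomorphism from the kernel of `θ` given by a component of `toWreath`. -/
def kerToAbelian (hkm : ∀ i, k i = 2 * m i) (hr : ∏ i, (x i * y i) ^ m i = 1)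
    (hθ : ∀ i, θ (PresentedGroup.of i) = flip) : θ.ker →* M where
  toFun g := (toWreath hkm hr g).left 1
  map_one' := by simp
  map_mul' g h := by
    have hg : θ g = 1 := g.2
    simp [toWreath_right hkm hr hθ, hg]

/-- The representative of a class modulo the kernel of `θ`, using the generator `s_i`. -/
def rep (k : Fin n → ℤ) (i : Fin n) (q : C₂) : Meskin n k :=
  if q = 1 then 1 else PresentedGroup.of i

lemma rep_one (i : Fin n) : rep k i 1 = 1 := rfl

lemma rep_flip (i : Fin n) : rep k i flip = PresentedGroup.of i := if_neg flip_ne_one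

lemma map_rep (hθ : ∀ i, θ (PresentedGroup.of i) = flip) (i : Fin n) (q : C₂) :
    θ (rep k i q) = q := by
  rcases eq_one_or_eq_flip q with rfl | rfl
  · rw [rep_one, map_one]
  · rw [rep_flip, hθ]

/-- The Schreier generator of the kernel of `θ` attached to the coset `q` and the
generator `s_j`. -/
def schreierGen (hθ : ∀ i, θ (PresentedGroup.of i) = flip) (i : Fin n) (q : C₂) (j : Fin n) :
    θ.ker :=
  ⟨rep k i q * PresentedGroup.of j * (rep k i (q * flip))⁻¹, by
    rw [MonoidHom.mem_ker, map_mul, map_mul, map_inv, map_rep hθ, map_rep hθ, hθ, mul_inv_cancel]⟩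

/-- The element of the kernel of `θ` obtained by multiplying `g` by a coset representative. -/
def kerPart (hθ : ∀ i, θ (PresentedGroup.of i) = flip) (i : Fin n) (g : Meskin n k) : θ.ker :=
  ⟨g * (rep k i (θ g))⁻¹, by rw [MonoidHom.mem_ker, map_mul, map_inv, map_rep hθ, mul_inv_cancel]⟩

lemma kerPart_mul_of (hθ : ∀ i, θ (PresentedGroup.of i) = flip) (i j : Fin n) (g : Meskin n k) :
    kerPart hθ i (g * PresentedGroup.of j) = kerPart hθ i g * schreierGen hθ i (θ g) j := by
  ext
  simp [kerPart, schreierGen, hθ, mul_assoc]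

lemma kerPart_coe (hθ : ∀ i, θ (PresentedGroup.of i) = flip) (i : Fin n) (g : θ.ker) :
    kerPart hθ i (g : Meskin n k) = g := by
  have hg : θ g = 1 := g.2
  ext
  simp [kerPart, hg, rep_one]

lemma schreierGen_one_self (hθ : ∀ i, θ (PresentedGroup.of i) = flip) (i : Fin n) :
    schreierGen hθ i 1 i = 1 := by
  ext
  simp [schreierGen, rep_one, rep_flip]

lemma schreierGen_mul (hθ : ∀ i, θ (PresentedGroup.of i) = flip) (i j : Fin n) :
    ((schreierGen hθ i 1 j * schreierGen hθ i flip j : θ.ker) : Meskin n k) =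
      PresentedGroup.of j ^ 2 := by
  simp only [schreierGen, Subgroup.coe_mul, one_mul, flip_mul_flip, rep_one, rep_flip]
  rw [inv_one, mul_one, mul_assoc, inv_mul_cancel_left, sq]

lemma prod_schreierGen (hkm : ∀ i, k i = 2 * m i)
    (hθ : ∀ i, θ (PresentedGroup.of i) = flip) (i : Fin n) :
    ∏ j, (Abelianization.of (schreierGen hθ i 1 j) *
      Abelianization.of (schreierGen hθ i flip j)) ^ m j = 1 := by
  have h : ((List.finRange n).map fun j =>
      (schreierGen hθ i 1 j * schreierGen hθ i flip j) ^ m j).prod = 1 := by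
    apply Subgroup.subtype_injective
    rw [map_list_prod, List.map_map, map_one, ← of_prod_eq_one k]
    congr 2
    funext j
    rw [Function.comp_apply, map_zpow, Subgroup.subtype_apply, schreierGen_mul, hkm, zpow_mul]
    rfl
  rw [Fin.prod_univ_def, ← map_one Abelianization.of, ← h, map_list_prod, List.map_map]
  simp [Function.comp_def]

lemma kerToAbelian_schreierGen (hkm : ∀ i, k i = 2 * m i) (hr : ∏ i, (x i * y i) ^ m i = 1)
    (hθ : ∀ i, θ (PresentedGroup.of i) = flip) {i : Fin n} (hxi : x i = 1) (q : C₂) (j : Fin n) :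
    kerToAbelian hkm hr hθ (schreierGen hθ i q j) = if q = 1 then x j else y j := by
  rcases eq_one_or_eq_flip q with rfl | rfl <;>
    simp [kerToAbelian, schreierGen, rep_one, rep_flip, toWreath_of, wreathGen, inv_eq_self,
      flip_mul_flip, hxi]

lemma map_toWreath_left (hkm : ∀ i, k i = 2 * m i) (hr : ∏ i, (x i * y i) ^ m i = 1)
    (hθ : ∀ i, θ (PresentedGroup.of i) = flip) (i : Fin n)
    (h : M →* Abelianization θ.ker)
    (hx : ∀ j, h (x j) = Abelianization.of (schreierGen hθ i 1 j))
    (hy : ∀ j, h (y j) = Abelianization.of (schreierGen hθ i flip j)) (g : Meskin n k) :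
    h ((toWreath hkm hr g).left 1) = Abelianization.of (kerPart hθ i g) := by
  have hgen (q : C₂) (j : Fin n) : h ((wreathGen (x j) (y j)).left q) =
      Abelianization.of (schreierGen hθ i q j) := by
    rcases eq_one_or_eq_flip q with rfl | rfl
    · simpa [wreathGen] using hx j
    · simpa [wreathGen, flip_ne_one] using hy j
  have step (g : Meskin n k) (j : Fin n) :
      h ((toWreath hkm hr (g * PresentedGroup.of j)).left 1) =
        Abelianization.of (kerPart hθ i (g * PresentedGroup.of j)) ↔
      h ((toWreath hkm hr g).left 1) = Abelianization.of (kerPart hθ i g) := by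
    rw [kerPart_mul_of, map_mul, map_mul, RegularWreathProduct.mul_left, Pi.mul_apply, map_mul,
      toWreath_of, toWreath_right hkm hr hθ, mul_one, inv_eq_self, hgen, mul_left_inj]
  have hmem : g ∈ Subgroup.closure (Set.range (PresentedGroup.of : Fin n → Meskin n k)) := by
    rw [PresentedGroup.closure_range_of]
    trivial
  induction hmem using Subgroup.closure_induction_right with
  | one =>
    have : kerPart hθ i (1 : Meskin n k) = 1 := kerPart_coe hθ i 1
    rw [this]
    simp
  | mul_right g _ s hs ih =>
    obtain ⟨j, rfl⟩ := hs
    exact (step g j).2 ih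
  | mul_inv_cancel g _ s hs ih =>
    obtain ⟨j, rfl⟩ := hs
    rw [← step _ j, inv_mul_cancel_right]
    exact ih

/-- The abelianization of the kernel of `θ` is the abelian group with generators `x_j`, `y_j`
and relations `x_i = 1` and `∏ (x_j y_j) ^ m_j = 1`. -/
theorem abelianization_ker_of_universal (hkm : ∀ i, k i = 2 * m i)
    (hr : ∏ i, (x i * y i) ^ m i = 1)
    (hθ : ∀ i, θ (PresentedGroup.of i) = flip) {i : Fin n} (hxi : x i = 1)
    (hext : ∀ f : M →* M, (∀ j, f (x j) = x j) → (∀ j, f (y j) = y j) → f = MonoidHom.id M)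
    (hlift : ∀ (A : Type) [CommGroup A] (a b : Fin n → A), a i = 1 →
      ∏ j, (a j * b j) ^ m j = 1 → ∃ h : M →* A, (∀ j, h (x j) = a j) ∧ ∀ j, h (y j) = b j) :
    Nonempty (Abelianization θ.ker ≃* M) := by
  obtain ⟨h, hx, hy⟩ := hlift (Abelianization θ.ker)
    (fun j => Abelianization.of (schreierGen hθ i 1 j))
    (fun j => Abelianization.of (schreierGen hθ i flip j))
    (by rw [schreierGen_one_self, map_one]) (prod_schreierGen hkm hθ i)
  refine ⟨MonoidHom.toMulEquiv (Abelianization.lift (kerToAbelian hkm hr hθ)) h ?_ ?_⟩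
  · apply Abelianization.hom_ext
    ext g
    simp only [MonoidHom.comp_apply, Abelianization.lift_apply_of, MonoidHom.id_apply]
    rw [← kerPart_coe hθ i g, ← map_toWreath_left hkm hr hθ i h hx hy, kerPart_coe]
    rfl
  · apply hext <;> intro j
    · rw [MonoidHom.comp_apply, hx, Abelianization.lift_apply_of,
        kerToAbelian_schreierGen hkm hr hθ hxi, if_pos rfl]
    · rw [MonoidHom.comp_apply, hy, Abelianization.lift_apply_of,
        kerToAbelian_schreierGen hkm hr hθ hxi, if_neg flip_ne_one]

end Wreath

section Linear

variable {n : ℕ} (m c : Fin n → ℤ) (i : Fin n)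

/-- The pair of functionals `(x, y) ↦ (x_i, ∑ c_j y_j)`. -/
def coordMap : (Fin n → ℤ) × (Fin n → ℤ) →ₗ[ℤ] ℤ × ℤ :=
  (LinearMap.proj i).prodMap (Fintype.linearCombination ℤ c)

variable {m c}

lemma coordMap_apply (v : (Fin n → ℤ) × (Fin n → ℤ)) :
    coordMap c i v = (v.1 i, ∑ j, v.2 j * c j) := by
  simp [coordMap, Fintype.linearCombination_apply]

lemma finrank_ker_coordMap (hc : ∑ j, m j * c j = 1) :
    Module.finrank ℤ (LinearMap.ker (coordMap c i)) = 2 * n - 2 := by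
  have hsurj : Function.Surjective (coordMap c i) := fun p => by
    refine ⟨(fun _ => p.1, p.2 • m), ?_⟩
    simp [coordMap_apply, mul_assoc, ← Finset.mul_sum, hc]
  have h := (LinearMap.ker (coordMap c i)).finrank_quotient_add_finrank
  rw [((coordMap c i).quotKerEquivOfSurjective hsurj).finrank_eq] at h
  simp only [Module.finrank_prod, Module.finrank_self, Module.finrank_fin_fun] at h
  omega

/-- The projection onto the kernel of `coordMap` along the span of `(e_i, 0)` and `(m, m)`. -/
def kerProj (hc : ∑ j, m j * c j = 1) :
    (Fin n → ℤ) × (Fin n → ℤ) →ₗ[ℤ] LinearMap.ker (coordMap c i) :=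
  LinearMap.codRestrict _
    (LinearMap.id -
      ((LinearMap.snd ℤ ℤ ℤ).comp (coordMap c i)).smulRight (m, m) -
      ((LinearMap.fst ℤ ℤ ℤ - m i • LinearMap.snd ℤ ℤ ℤ).comp (coordMap c i)).smulRight
        (Pi.single i 1, 0)) fun v => by
    have h : coordMap c i (m, m) = (m i, 1) := by rw [coordMap_apply, hc]
    have h' : coordMap c i (Pi.single i 1, 0) = (1, 0) := by simp [coordMap_apply]
    rw [LinearMap.mem_ker]
    simp only [LinearMap.sub_apply, LinearMap.smulRight_apply, map_sub, map_smul, h, h']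
    ext <;> simp [mul_comm]

lemma kerProj_coe (hc : ∑ j, m j * c j = 1) (v : (Fin n → ℤ) × (Fin n → ℤ)) :
    (kerProj i hc v : (Fin n → ℤ) × (Fin n → ℤ)) =
      v - (coordMap c i v).2 • (m, m) -
        ((coordMap c i v).1 - m i * (coordMap c i v).2) • (Pi.single i 1, 0) := rfl

lemma kerProj_apply_coe (hc : ∑ j, m j * c j = 1) (v : LinearMap.ker (coordMap c i)) :
    kerProj i hc v = v := by
  have hv : coordMap c i v = 0 := v.2
  ext1
  simp [kerProj_coe, hv]

lemma kerProj_single (hc : ∑ j, m j * c j = 1) : kerProj i hc (Pi.single i 1, 0) = 0 := by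
  ext1
  simp [kerProj_coe, coordMap_apply]

lemma kerProj_diagonal (hc : ∑ j, m j * c j = 1) : kerProj i hc (m, m) = 0 := by
  ext1
  simp [kerProj_coe, coordMap_apply, hc]

lemma map_pair_eq_sum {A : Type} [AddCommGroup A] (H : (Fin n → ℤ) × (Fin n → ℤ) →ₗ[ℤ] A) :
    H (m, m) = ∑ j, m j • (H (Pi.single j 1, 0) + H (0, Pi.single j 1)) := by
  have h : ((m, m) : (Fin n → ℤ) × (Fin n → ℤ)) =
      ∑ j, m j • ((Pi.single j 1, 0) + (0, Pi.single j 1)) := by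
    ext l <;> simp [Prod.fst_sum, Prod.snd_sum, Finset.sum_apply, Pi.single_apply]
  conv_lhs => rw [h, map_sum]
  exact Finset.sum_congr rfl fun j _ => by rw [map_smul, map_add]

lemma ker_hom_ext (hc : ∑ j, m j * c j = 1)
    (f : LinearMap.ker (coordMap c i) →ₗ[ℤ] LinearMap.ker (coordMap c i))
    (hx : ∀ j, f (kerProj i hc (Pi.single j 1, 0)) = kerProj i hc (Pi.single j 1, 0))
    (hy : ∀ j, f (kerProj i hc (0, Pi.single j 1)) = kerProj i hc (0, Pi.single j 1))
    (v : LinearMap.ker (coordMap c i)) : f v = v := by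
  have h : f.comp (kerProj i hc) = kerProj i hc := by
    ext1 <;> refine LinearMap.pi_ext' fun j => LinearMap.ext_ring ?_
    · exact hx j
    · exact hy j
  have hv := DFunLike.congr_fun h (v : (Fin n → ℤ) × (Fin n → ℤ))
  rwa [LinearMap.comp_apply, kerProj_apply_coe] at hv

lemma exists_ker_lift (hc : ∑ j, m j * c j = 1) {A : Type} [AddCommGroup A] (a b : Fin n → A)
    (ha : a i = 0) (hab : ∑ j, m j • (a j + b j) = 0) :
    ∃ h : LinearMap.ker (coordMap c i) →ₗ[ℤ] A,
      (∀ j, h (kerProj i hc (Pi.single j 1, 0)) = a j) ∧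
      ∀ j, h (kerProj i hc (0, Pi.single j 1)) = b j := by
  let H : (Fin n → ℤ) × (Fin n → ℤ) →ₗ[ℤ] A :=
    (Fintype.linearCombination ℤ a).coprod (Fintype.linearCombination ℤ b)
  have Hx (j : Fin n) : H (Pi.single j 1, 0) = a j := by simp [H]
  have Hy (j : Fin n) : H (0, Pi.single j 1) = b j := by simp [H]
  have Hm : H (m, m) = 0 := by
    rw [map_pair_eq_sum]
    simpa only [Hx, Hy] using hab
  have key (v : (Fin n → ℤ) × (Fin n → ℤ)) : H (kerProj i hc v) = H v := by
    rw [kerProj_coe, map_sub, map_sub, map_smul, map_smul, Hm, Hx, ha, smul_zero, smul_zero,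
      sub_zero, sub_zero]
  exact ⟨H.comp (Submodule.subtype _), fun j => (key _).trans (Hx j), fun j => (key _).trans (Hy j)⟩

end Linear

end Meskin

theorem stmt_18 (n : ℕ) (hn : 2 ≤ n) (k : Fin n → ℤ) (hk : ∀ i, 1 ≤ k i)
    (hgcd : Finset.univ.gcd k = 2)
    (θ : Meskin n k →* Multiplicative (ZMod 2))
    (hθ : ∀ i, θ (PresentedGroup.of i) = Multiplicative.ofAdd 1) :
    (MonoidHom.ker θ).index = 2 ∧
      Nonempty (Abelianization ↥(MonoidHom.ker θ) ≃*
        Multiplicative (Fin (2 * n - 2) → ℤ)) := by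
  let i : Fin n := ⟨0, by omega⟩
  refine ⟨?_, ?_⟩
  · have hsurj : Function.Surjective θ := fun q => ⟨_, Meskin.map_rep hθ i q⟩
    rw [Subgroup.index_ker, MonoidHom.range_eq_top.2 hsurj, Subgroup.card_top]
    simp
  have hdvd (j : Fin n) : (2 : ℤ) ∣ k j := hgcd ▸ Finset.gcd_dvd (Finset.mem_univ j)
  choose m hkm using hdvd
  obtain ⟨c, hc⟩ := Finset.gcd_eq_sum_mul Finset.univ k
  replace hc : ∑ j, m j * c j = 1 := by
    simp only [hgcd, hkm, mul_assoc, ← Finset.mul_sum] at hc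
    omega
  let K := LinearMap.ker (Meskin.coordMap c i)
  let e : K ≃ₗ[ℤ] (Fin (2 * n - 2) → ℤ) :=
    LinearEquiv.ofFinrankEq _ _ (by rw [Meskin.finrank_ker_coordMap i hc]; simp)
  obtain ⟨E⟩ := Meskin.abelianization_ker_of_universal (M := Multiplicative K) (i := i)
    (x := fun j => .ofAdd (Meskin.kerProj i hc (Pi.single j 1, 0)))
    (y := fun j => .ofAdd (Meskin.kerProj i hc (0, Pi.single j 1))) hkm
    ((Meskin.map_pair_eq_sum (Meskin.kerProj i hc)).symm.trans (Meskin.kerProj_diagonal i hc))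
    hθ (Meskin.kerProj_single i hc)
    (fun f hx hy => MonoidHom.ext fun v =>
      Meskin.ker_hom_ext i hc (MonoidHom.toAdditive f).toIntLinearMap hx hy v)
    (fun A _ a b ha hab => by
      obtain ⟨h, hx, hy⟩ := Meskin.exists_ker_lift i hc (A := Additive A) a b ha hab
      exact ⟨AddMonoidHom.toMultiplicativeLeft h.toAddMonoidHom, hx, hy⟩)
  exact ⟨E.trans e.toAddEquiv.toMultiplicative⟩
end
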